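/- arXiv:2306.09655 — 2 statements merged into one kernel-verified Lean document; each statement's English description precedes it below -/
import Mathlib

section
/- Let D be a digraph of order n ≥ 4 such that n−1 of its vertices have degree at least n and the remaining vertex z has degree at most n−2. If D contains a directed cycle C = x_1 x_2 … x_m x_1 through z that has an (x_i, x_j)-bypass P such that z does not lie on the subpath of C from x_{i+1} to x_{j−1}, then D contains a directed cycle through z of length at least m+1. -/
/-! A digraph on a vertex type `V` is given by its arc relation `A : V → V → Prop`
(this automatically forbids multiple arcs); looplessness is expressed by the
hypothesis `Irreflexive A`. -/

/-- The degree of `x`: its out-degree plus its in-degree. -/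
noncomputable def degree {V : Type*} (A : V → V → Prop) (x : V) : ℕ :=
  {y | A x y}.ncard + {y | A y x}.ncard

/-- `degreeIn A x S` is the number of arcs between `x` and vertices of `S`,
in both directions. -/
noncomputable def degreeIn {V : Type*} (A : V → V → Prop) (x : V) (S : Set V) : ℕ :=
  {y ∈ S | A x y}.ncard + {y ∈ S | A y x}.ncard

/-- `c : Fin m → V` is a directed cycle of length `m` (indices taken mod `m`). -/
def IsCycle {V : Type*} (A : V → V → Prop) {m : ℕ} (c : Fin m → V) : Prop :=
  2 ≤ m ∧ Function.Injective c ∧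
    ∀ i : Fin m, A (c i) (c ⟨(i.val + 1) % m, Nat.mod_lt _ i.pos⟩)

/-- `p : Fin m → V` is a directed path on `m` vertices (of length `m - 1`). -/
def IsPath {V : Type*} (A : V → V → Prop) {m : ℕ} (p : Fin m → V) : Prop :=
  Function.Injective p ∧ ∀ (i : Fin m) (h : i.val + 1 < m), A (p i) (p ⟨i.val + 1, h⟩)

/-- A digraph is Hamiltonian if it has a directed cycle through all of its vertices. -/
def IsHamiltonian {V : Type*} [Fintype V] (A : V → V → Prop) : Prop :=
  ∃ c : Fin (Fintype.card V) → V, IsCycle A c ∧ Function.Surjective c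

/-- Reachability by a directed path staying inside the set `S`. -/
def ReachIn {V : Type*} (A : V → V → Prop) (S : Set V) : V → V → Prop :=
  Relation.ReflTransGen (fun u v => u ∈ S ∧ v ∈ S ∧ A u v)

/-- A digraph is strong if every vertex is reachable from every other by a directed path. -/
def IsStrong {V : Type*} (A : V → V → Prop) : Prop :=
  ∀ x y : V, Relation.ReflTransGen A x y

/-- A digraph is `k`-strong if it has at least `k + 1` vertices and the deletion of
any set of at most `k - 1` vertices leaves a strong digraph. -/
def IsKStrong {V : Type*} [Fintype V] (A : V → V → Prop) (k : ℕ) : Prop :=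
  k + 1 ≤ Fintype.card V ∧
    ∀ S : Set V, S.ncard ≤ k - 1 → ∀ x ∈ Sᶜ, ∀ y ∈ Sᶜ, ReachIn A Sᶜ x y

/-- The number of arcs between `v` and `u`, in both directions. -/
noncomputable def arcCount {V : Type*} (A : V → V → Prop) (v u : V) : ℕ :=
  open Classical in (if A v u then 1 else 0) + (if A u v then 1 else 0)

section

variable {V : Type*} {A : V → V → Prop}

theorem arcCount_le_two (v u : V) : arcCount A v u ≤ 2 := by
  unfold arcCount; split_ifs <;> omega

theorem arcCount_self (hirr : ∀ x, ¬ A x x) (v : V) : arcCount A v v = 0 := by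
  simp [arcCount, hirr v]

theorem arcCount_eq_zero {v u : V} (h₁ : ¬ A v u) (h₂ : ¬ A u v) : arcCount A v u = 0 := by
  simp [arcCount, h₁, h₂]

theorem degree_eq_sum_arcCount [Fintype V] (v : V) : degree A v = ∑ u, arcCount A v u := by
  classical
  simp [degree, arcCount, Finset.sum_add_distrib, Set.ncard_eq_toFinset_card']

theorem exists_split_of_not_isChain {S : V → V → Prop} {l : List V} (h : ¬ l.IsChain S) :
    ∃ l₁ x y l₂, l = l₁ ++ x :: y :: l₂ ∧ ¬ S x y := by
  induction l with
  | nil => simp at h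
  | cons a l ih =>
    cases l with
    | nil => simp at h
    | cons b l =>
      by_cases hab : S a b
      · obtain ⟨l₁, x, y, l₂, e, hxy⟩ := ih fun hc => h (List.isChain_cons_cons.2 ⟨hab, hc⟩)
        exact ⟨a :: l₁, x, y, l₂, by rw [e]; rfl, hxy⟩
      · exact ⟨[], a, b, l, rfl, hab⟩

theorem List.IsChain.insert_between {l₁ l₂ : List V} {x y v : V}
    (h : (l₁ ++ x :: y :: l₂).IsChain A) (hx : A x v) (hy : A v y) :
    (l₁ ++ x :: v :: y :: l₂).IsChain A := by
  rw [List.isChain_split] at h ⊢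
  exact ⟨h.1, by simp_all [List.isChain_cons_cons]⟩

/-- A vertex that cannot be inserted between two consecutive vertices of a list of `k` vertices
has at most `k + 1` arcs to and from that list. -/
theorem sum_arcCount_le_of_isChain {v : V} {l : List V}
    (h : l.IsChain fun x y => ¬ (A x v ∧ A v y)) :
    (l.map (arcCount A v)).sum ≤ l.length + 1 := by
  classical
  have key : ∀ (l : List V) (x : V), (x :: l).IsChain (fun x y => ¬ (A x v ∧ A v y)) →
      ((x :: l).map (arcCount A v)).sum ≤ l.length + 1 + if A v x then 1 else 0 := by
    intro l
    induction l with
    | nil => intro x _; simp only [arcCount, List.map_cons, List.map_nil, List.sum_cons,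
        List.sum_nil, List.length_nil]; split_ifs <;> omega
    | cons y l ih =>
      intro x hx
      rw [List.isChain_cons_cons] at hx
      have := ih y hx.2
      rw [List.map_cons, List.sum_cons, List.length_cons]
      have hxy := hx.1
      by_cases h₁ : A x v <;> by_cases h₂ : A v y <;> by_cases h₃ : A v x <;>
        simp_all [arcCount] <;> omega
  cases l with
  | nil => simp
  | cons x l =>
    have := key l x h
    rw [List.length_cons]
    split_ifs at this <;> omega

theorem Finset.sum_add_two_le {F : Finset V} {f : V → ℕ} {v : V} (hv : v ∈ F) (hfv : f v = 0)
    (hf : ∀ u ∈ F, f u ≤ 2) : ∑ u ∈ F, f u + 2 ≤ 2 * F.card := by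
  classical
  have h : ∑ u ∈ F.erase v, f u ≤ _ :=
    Finset.sum_le_card_nsmul _ f 2 fun u hu => hf u (Finset.mem_of_mem_erase hu)
  have h₁ := Finset.add_sum_erase F f hv
  have h₂ := Finset.card_erase_add_one hv
  rw [smul_eq_mul] at h
  omega

/-- Reachability inside `S` is witnessed by a path without repeated vertices. -/
theorem ReachIn.exists_nodup_path {S : Set V} {x y : V} (h : ReachIn A S x y) (hy : y ∈ S) :
    ∃ l t : List V, l = t ++ [y] ∧ (∃ s, l = x :: s) ∧ l.Nodup ∧ l.IsChain A ∧ ∀ u ∈ l, u ∈ S := by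
  induction h using Relation.ReflTransGen.head_induction_on with
  | refl => exact ⟨[y], [], rfl, ⟨[], rfl⟩, by simp, by simp, by simpa⟩
  | @head x w hxw _ ih =>
    obtain ⟨l, t, ht, ⟨s, hs⟩, hn, hc, hS⟩ := ih
    by_cases hx : x ∈ l
    · obtain ⟨l₁, l₂, e⟩ := List.append_of_mem hx
      have hsuf : x :: l₂ <:+ l := ⟨l₁, e.symm⟩
      have hlast : (x :: l₂).getLast (by simp) = y := by
        have h₁ : l.getLast? = some y := by simp [ht]
        rw [e, List.getLast?_append_of_ne_nil _ (by simp),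
          List.getLast?_eq_some_getLast (by simp)] at h₁
        exact Option.some.inj h₁
      refine ⟨x :: l₂, (x :: l₂).dropLast, ?_, ⟨l₂, rfl⟩, hn.sublist hsuf.sublist,
        hc.suffix hsuf, fun u hu => hS u (hsuf.subset hu)⟩
      conv_rhs => rw [← hlast]
      exact (List.dropLast_append_getLast _).symm
    · refine ⟨x :: l, x :: t, by rw [ht]; rfl, ⟨l, rfl⟩, List.nodup_cons.2 ⟨hx, hn⟩, ?_, ?_⟩
      · rw [hs] at hc ⊢
        exact List.isChain_cons_cons.2 ⟨hxw.2.2, hc⟩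
      · rintro u (_ | ⟨_, hu⟩)
        exacts [hxw.1, hS u hu]

/-- If no cycle through `z` is longer than the cycle `b M a Q` through `z`, where `z` is not on
`Q`, then no walk outside the cycle leads from `a` to `b`. -/
theorem no_bypass [Fintype V] [DecidableEq V] (hirr : ∀ x, ¬ A x x) {z : V}
    (hdeg : ∀ v, v ≠ z → Fintype.card V ≤ degree A v) (F : Finset V)
    (hmax : ∀ x l, (x :: l).Nodup → (x :: (l ++ [x])).IsChain A → z ∈ x :: l →
      (x :: l).length ≤ F.card)
    (a b : V) (M Q : List V) (hF : F = (b :: (M ++ a :: Q)).toFinset)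
    (hnd : (b :: (M ++ a :: Q)).Nodup) (hch : (b :: (M ++ a :: (Q ++ [b]))).IsChain A)
    (hz : z ∈ b :: (M ++ [a])) (y y' : V) (hr : ReachIn A (Fᶜ : Finset V) y y')
    (hy : y ∉ F) (hy' : y' ∉ F) (hay : A a y) (hyb : A y' b) : False := by
  induction hk : Q.length using Nat.strong_induction_on generalizing a b M Q y y' with
  | _ k ih =>
  have hmem : ∀ u, u ∈ F ↔ u = b ∨ u ∈ M ∨ u = a ∨ u ∈ Q := by
    intro u; rw [hF, List.mem_toFinset]; simp
  have hcard : F.card = M.length + Q.length + 2 := by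
    rw [hF, List.toFinset_card_of_nodup hnd]; simp; omega
  have hzF : z ∈ F := by rw [hmem]; simp at hz; tauto
  have hzQ : z ∉ Q := by
    intro h
    simp only [List.nodup_cons, List.nodup_append, List.mem_append, List.mem_cons] at hnd hz
    grind
  -- a walk from `a` to a vertex of `Q` would be a shorter bypass
  have no_in : ∀ v ∈ Q, ∀ w, w ∉ F → ReachIn A (Fᶜ : Finset V) y w → ¬ A w v := by
    intro v hv w hw hyw hwv
    obtain ⟨Q₁, Q₂, rfl⟩ := List.append_of_mem hv
    have hp : (b :: (M ++ a :: (Q₁ ++ v :: Q₂))).Perm (v :: ((Q₂ ++ b :: M) ++ a :: Q₁)) := by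
      rw [List.perm_iff_count]; intro u; simp only [List.count_cons, List.count_append]; ring
    refine ih Q₁.length (by simp at hk; omega) a v (Q₂ ++ b :: M) Q₁
      (by rw [hF]; exact List.toFinset_eq_of_perm _ _ hp) (hp.nodup_iff.1 hnd) ?_ ?_ y w hyw hy hw
      hay hwv rfl
    · have h₁ : ((b :: (M ++ a :: Q₁)) ++ v :: (Q₂ ++ [b])).IsChain A := by simpa using hch
      have h₂ : ((v :: Q₂) ++ b :: (M ++ a :: (Q₁ ++ [v]))).IsChain A := by
        rw [List.isChain_split] at h₁ ⊢
        exact ⟨by simpa using h₁.2, by simpa using h₁.1⟩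
      simpa using h₂
    · simp at hz ⊢; tauto
  have no_out : ∀ v ∈ Q, ∀ w, w ∉ F → ReachIn A (Fᶜ : Finset V) w y' → ¬ A v w := by
    intro v hv w hw hyw hwv
    obtain ⟨Q₁, Q₂, rfl⟩ := List.append_of_mem hv
    refine ih Q₂.length (by simp at hk; omega) v b (M ++ a :: Q₁) Q₂
      (by rw [hF]; simp) (by simpa using hnd) (by simpa using hch) ?_ w y' hyw hw hy'
      hwv hyb rfl
    simp at hz ⊢; tauto
  -- extend the part of the cycle from `b` to `a` by as many vertices of `Q` as possible
  let T : ℕ → Prop := fun s => ∃ S : List V, S.length = s ∧ S.Nodup ∧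
    (∀ u ∈ b :: (M ++ [a]), u ∈ S) ∧ (∀ u ∈ S, u ∈ F) ∧ (y' :: (S ++ [y])).IsChain A
  have hT0 : T (M.length + 2) := by
    refine ⟨b :: (M ++ [a]), by simp, ?_, fun _ h => h, ?_, ?_⟩
    · have : (b :: (M ++ [a]) ++ Q).Nodup := by simpa using hnd
      exact this.of_append_left
    · intro u hu; rw [hmem]; simp at hu; tauto
    · have h₁ : ((b :: M) ++ a :: (Q ++ [b])).IsChain A := by simpa using hch
      have h₂ : ((y' :: b :: M) ++ a :: [y]).IsChain A := by
        rw [List.isChain_split] at h₁ ⊢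
        refine ⟨?_, by simpa⟩
        exact List.isChain_cons_cons.2 ⟨hyb, h₁.1⟩
      simpa using h₂
  have hTb : ∀ s, T s → s ≤ F.card := by
    rintro s ⟨S, rfl, hS, -, hSF, -⟩
    rw [← List.toFinset_card_of_nodup hS]
    exact Finset.card_le_card fun u hu => hSF u (List.mem_toFinset.1 hu)
  classical
  obtain ⟨S, hSl, hSn, hRS, hSF, hSc⟩ := Nat.findGreatest_spec (hTb _ hT0) hT0
  have hSmax : ∀ s, T s → s ≤ S.length := fun s hs => by
    rw [hSl]; exact Nat.le_findGreatest (hTb _ hs) hs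
  have hSge : M.length + 2 ≤ S.length := hSmax _ hT0
  have hSsub : S.toFinset ⊆ F := fun u hu => hSF u (List.mem_toFinset.1 hu)
  have hSlt : ∃ v ∈ F, v ∉ S := by
    by_contra! hall
    obtain ⟨W, t, ht, ⟨s, hs⟩, hWn, hWc, hWF⟩ := hr.exists_nodup_path (by simpa using hy')
    have hlen := hmax y (s ++ S) ?_ ?_ ?_
    · have : F.card ≤ S.length := by
        rw [← List.toFinset_card_of_nodup hSn]
        exact Finset.card_le_card fun u hu => List.mem_toFinset.2 (hall u hu)
      simp at hlen; omega
    · rw [← List.cons_append, ← hs, List.nodup_append]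
      refine ⟨hWn, hSn, ?_⟩
      rintro u hu _ hv rfl
      have := hWF u hu
      simp at this
      exact this (hSF u hv)
    · rw [← List.cons_append, ← List.cons_append, ← hs, ht, List.append_assoc, List.append_assoc]
      rw [ht] at hWc
      exact List.isChain_split.2 ⟨hWc, hSc⟩
    · simp [hRS z hz]
  obtain ⟨v, hvF, hvS⟩ := hSlt
  have hvQ : v ∈ Q := by
    have := (hmem v).1 hvF
    have h₂ := mt (hRS v) hvS
    simp at h₂; tauto
  have hvS' : (S.map (arcCount A v)).sum ≤ S.length + 1 := by
    refine sum_arcCount_le_of_isChain ?_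
    by_contra hn
    obtain ⟨l₁, x, w, l₂, rfl, hxw⟩ := exists_split_of_not_isChain hn
    rw [not_not] at hxw
    have hp : (l₁ ++ x :: v :: w :: l₂).Perm (v :: (l₁ ++ x :: w :: l₂)) := by
      rw [List.perm_iff_count]; intro u; simp only [List.count_cons, List.count_append]; ring
    have := hSmax _ ⟨l₁ ++ x :: v :: w :: l₂, rfl, hp.nodup_iff.2 (List.nodup_cons.2 ⟨hvS, hSn⟩),
      fun u hu => hp.mem_iff.2 (List.mem_cons_of_mem _ (hRS u hu)), ?_, ?_⟩
    · rw [hp.length_eq] at this; simp at this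
    · intro u hu
      rcases List.mem_cons.1 (hp.mem_iff.1 hu) with rfl | h
      exacts [hvF, hSF u h]
    · have h₁ : ((y' :: l₁) ++ x :: w :: (l₂ ++ [y])).IsChain A := by simpa using hSc
      simpa using h₁.insert_between hxw.1 hxw.2
  have hyR : ((b :: (M ++ [a])).map (arcCount A y)).sum ≤ M.length + 3 := by
    have h := sum_arcCount_le_of_isChain (A := A) (v := y) (l := b :: (M ++ [a])) ?_
    · simpa using h
    by_contra hn
    obtain ⟨l₁, x, w, l₂, e, hxw⟩ := exists_split_of_not_isChain hn
    rw [not_not] at hxw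
    have h₁ : (l₁ ++ x :: w :: (l₂ ++ Q ++ [b])).IsChain A := by
      have : (b :: (M ++ [a]) ++ (Q ++ [b])).IsChain A := by simpa using hch
      rw [e] at this; simpa using this
    have h₂ := h₁.insert_between hxw.1 hxw.2
    have hn₁ : (l₁ ++ x :: w :: l₂ ++ Q).Nodup := by rw [← e]; simpa using hnd
    have hp : (l₁ ++ x :: y :: w :: (l₂ ++ Q)).Perm (y :: (l₁ ++ x :: w :: l₂ ++ Q)) := by
      rw [List.perm_iff_count]; intro u; simp only [List.count_cons, List.count_append]; ring
    have hyn : y ∉ l₁ ++ x :: w :: l₂ ++ Q := by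
      rw [← e]; rw [hmem] at hy; simpa using hy
    have hn₂ := hp.nodup_iff.2 (List.nodup_cons.2 ⟨hyn, hn₁⟩)
    have hz₂ : z ∈ l₁ ++ x :: y :: w :: (l₂ ++ Q) := by
      rw [hp.mem_iff, ← e]; simp at hz ⊢; tauto
    have hl₂ : (l₁ ++ x :: y :: w :: (l₂ ++ Q)).length = F.card + 1 := by
      rw [hp.length_eq, ← e, hcard]; simp; omega
    cases l₁ with
    | nil =>
      obtain ⟨rfl, -⟩ := List.cons.inj e
      have := hmax b (y :: w :: (l₂ ++ Q)) (by simpa using hn₂) (by simpa using h₂)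
        (by simpa using hz₂)
      simp at hl₂ this; omega
    | cons b' l₁ =>
      obtain ⟨rfl, -⟩ := List.cons.inj e
      have := hmax b (l₁ ++ x :: y :: w :: (l₂ ++ Q)) (by simpa using hn₂) (by simpa using h₂)
        (by simpa using hz₂)
      simp at hl₂ this; omega
  have hyQ : (Q.map (arcCount A y)).sum = 0 := by
    rw [List.sum_eq_zero_iff]
    intro x hx
    obtain ⟨u, hu, rfl⟩ := List.mem_map.1 hx
    exact arcCount_eq_zero (no_in u hu y hy .refl) (no_out u hu y hy hr)
  have hyF : ∑ u ∈ F, arcCount A y u ≤ M.length + 3 := by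
    have h := List.sum_toFinset (arcCount A y) hnd
    rw [← hF] at h
    rw [h]
    simp only [List.map_cons, List.map_append, List.map_nil, List.sum_cons, List.sum_append,
      List.sum_nil] at hyR ⊢
    omega
  have hvF' : ∑ u ∈ F, arcCount A v u + 1 + S.length ≤ 2 * F.card := by
    have h₁ : ∑ u ∈ F \ S.toFinset, arcCount A v u + ∑ u ∈ S.toFinset, arcCount A v u = _ :=
      Finset.sum_sdiff hSsub
    have h₄ : ∑ u ∈ S.toFinset, arcCount A v u = (S.map (arcCount A v)).sum :=
      List.sum_toFinset _ hSn
    have h₂ := Finset.sum_add_two_le (F := F \ S.toFinset) (f := arcCount A v) (v := v)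
      (by simp [hvF, hvS]) (arcCount_self hirr v) fun u _ => arcCount_le_two v u
    have h₃ := Finset.card_sdiff_add_card_eq_card hSsub
    rw [List.toFinset_card_of_nodup hSn] at h₃
    omega
  have hout : ∑ u ∈ Fᶜ, (arcCount A y u + arcCount A v u) + 2 ≤ 2 * Fᶜ.card := by
    refine Finset.sum_add_two_le (v := y) (by simpa using hy) ?_ ?_
    · rw [arcCount_self hirr,
        arcCount_eq_zero (no_out v hvQ y hy hr) (no_in v hvQ y hy .refl)]
    · intro u hu
      have hu' : u ∉ F := by simpa using hu
      have h₁ : A y u → ¬ A u v := fun h =>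
        no_in v hvQ u hu' (.single ⟨by simpa using hy, by simpa using hu', h⟩)
      have h₂ : A u y → ¬ A v u := fun h =>
        no_out v hvQ u hu' (.head ⟨by simpa using hu', by simpa using hy, h⟩ hr)
      unfold arcCount
      split_ifs <;> first | omega | tauto
  have hdy := hdeg y fun h => hy (h ▸ hzF)
  have hdv := hdeg v fun h => hzQ (h ▸ hvQ)
  rw [degree_eq_sum_arcCount, ← Finset.sum_add_sum_compl F] at hdy hdv
  rw [Finset.sum_add_distrib] at hout
  have hcc := Finset.card_add_card_compl F
  omega

theorem exists_isCycle_of_isChain {x : V} {l : List V} (hl : l ≠ []) (hn : (x :: l).Nodup)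
    (hc : (x :: (l ++ [x])).IsChain A) : IsCycle A (fun k : Fin (x :: l).length => (x :: l)[k]) := by
  refine ⟨?_, ?_, ?_⟩
  · have := List.length_pos_iff.2 hl
    simp; omega
  · intro s t h
    exact Fin.ext ((hn.getElem_inj_iff).1 h)
  · intro s
    have hs := s.isLt
    rw [← List.cons_append, List.isChain_iff_getElem] at hc
    have h := hc s.val (by simp at hs ⊢; omega)
    rw [List.getElem_append_left hs] at h
    rcases Nat.lt_or_ge (s.val + 1) (x :: l).length with h₁ | h₁
    · rw [List.getElem_append_left h₁] at h
      simpa only [Fin.getElem_fin, Nat.mod_eq_of_lt h₁] using h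
    · have h₂ : s.val + 1 = (x :: l).length := by omega
      simp only [Fin.getElem_fin, h₂, Nat.mod_self]
      simpa [h₂] using h

end

/-- Let `D` be a digraph of order `n ≥ 4` such that `n - 1` vertices have degree at
least `n` and the remaining vertex `z` has degree at most `n - 2`.  If `D` contains a
directed cycle `c = x₁ x₂ … x_m x₁` through `z` having an `(x_i, x_j)`-bypass `p`
(a directed path from `x_i` to `x_j` with at least `3` vertices meeting the cycle
only in `x_i` and `x_j`) such that `z` does not lie on the subpath of the cycle from
`x_{i+1}` to `x_{j-1}`, then `D` contains a directed cycle through `z` of length at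
least `m + 1`.  Here `j = i + d (mod m)` with `1 ≤ d < m`, so the subpath from
`x_{i+1}` to `x_{j-1}` consists of the vertices `c (i + k)` for `1 ≤ k < d`. -/
theorem statement2 {V : Type*} [Fintype V] [DecidableEq V] (A : V → V → Prop)
    (hirr : Irreflexive A)
    (n : ℕ) (hn4 : 4 ≤ n) (hcard : Fintype.card V = n)
    (z : V)
    (hdeg : ∀ v : V, v ≠ z → n ≤ degree A v)
    (hdegz : degree A z ≤ n - 2)
    (m : ℕ) (c : Fin m → V) (hc : IsCycle A c) (hzc : z ∈ Set.range c)
    (i j : Fin m) (d : ℕ) (hd1 : 1 ≤ d) (hdm : d < m)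
    (hij : j.val = (i.val + d) % m)
    (r : ℕ) (hr3 : 3 ≤ r) (p : Fin r → V) (hp : IsPath A p)
    (hp0 : p ⟨0, by omega⟩ = c i)
    (hpl : p ⟨r - 1, by omega⟩ = c j)
    (hmeet : Set.range p ∩ Set.range c = {c i, c j})
    (hzavoid : ∀ k : ℕ, 1 ≤ k → k < d →
      c ⟨(i.val + k) % m, Nat.mod_lt _ i.pos⟩ ≠ z) :
    ∃ (r' : ℕ) (c' : Fin r' → V), m + 1 ≤ r' ∧ IsCycle A c' ∧ z ∈ Set.range c' := by
  subst hcard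
  by_contra hno
  obtain ⟨hm2, hinj, hcyc⟩ := hc
  have hm0 : 0 < m := by omega
  let f : ℕ → V := fun k => c ⟨(i.val + k) % m, Nat.mod_lt _ hm0⟩
  have hfA : ∀ k, A (f k) (f (k + 1)) := by
    intro k
    have h := hcyc ⟨(i.val + k) % m, Nat.mod_lt _ hm0⟩
    simpa [f, Nat.mod_add_mod, Nat.add_assoc] using h
  have hfm : ∀ k, f (m + k) = f k := by
    intro k
    simp [f, Nat.add_left_comm _ m]
  have hf0 : f m = c i := by
    simp [f, Nat.mod_eq_of_lt i.isLt]
  have hfd : f d = c j := by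
    simp only [f, ← hij]
  have hfinj : ∀ s t, s < t → t < s + m → f s ≠ f t := by
    intro s t hst hts h
    have h₁ : (i.val + s) ≡ (i.val + t) [MOD m] := by
      simpa [f, Nat.ModEq] using hinj h
    have h₂ : s ≡ t [MOD m] := Nat.ModEq.add_left_cancel' _ h₁
    have h₃ := (Nat.modEq_iff_dvd' hst.le).1 h₂
    have := Nat.le_of_dvd (by omega) h₃
    omega
  have hfsurj : ∀ v ∈ Set.range c, ∃ k, d ≤ k ∧ k < d + m ∧ f k = v := by
    rintro _ ⟨s, rfl⟩
    have hs := s.isLt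
    have hi := i.isLt
    have hall : ∀ k, (i.val + k) % m = s.val → f k = c s := fun k hk => by simp only [f, hk]
    rcases Nat.lt_or_ge s.val (i.val + d) with h | h
    · rcases Nat.lt_or_ge (s.val + m) (i.val + d) with h' | h'
      · refine ⟨s.val + 2 * m - i.val, by omega, by omega, hall _ ?_⟩
        rw [show i.val + (s.val + 2 * m - i.val) = s.val + 2 * m by omega]
        simp [Nat.mod_eq_of_lt hs]
      · refine ⟨s.val + m - i.val, by omega, by omega, hall _ ?_⟩
        rw [show i.val + (s.val + m - i.val) = s.val + m by omega]
        simp [Nat.mod_eq_of_lt hs]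
    · refine ⟨s.val - i.val, by omega, by omega, hall _ ?_⟩
      rw [show i.val + (s.val - i.val) = s.val by omega, Nat.mod_eq_of_lt hs]
  let M : List V := (List.range' (d + 1) (m - d - 1)).map f
  let Q : List V := (List.range' (m + 1) (d - 1)).map f
  have hlist : c j :: (M ++ c i :: Q) = (List.range' d m).map f := by
    have h₁ : List.range' d m = List.range' d (1 + ((m - d - 1) + (1 + (d - 1)))) := by
      congr 1; omega
    rw [h₁, ← List.range'_append_1, ← List.range'_append_1, ← List.range'_append_1,
      show d + 1 + (m - d - 1) = m by omega]
    simp [M, Q, hfd, hf0]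
  have hclosed : c j :: (M ++ c i :: (Q ++ [c j])) = (List.range' d (m + 1)).map f := by
    rw [← List.range'_append_1, List.map_append, ← hlist]
    simp [Nat.add_comm d m, hfm, hfd]
  have hnd : (c j :: (M ++ c i :: Q)).Nodup := by
    rw [hlist]
    refine List.Nodup.map_on ?_ List.nodup_range'
    intro s hs t ht h
    rw [List.mem_range'_1] at hs ht
    rcases lt_trichotomy s t with h' | h' | h'
    · exact absurd h (hfinj s t h' (by omega))
    · exact h'
    · exact absurd h.symm (hfinj t s h' (by omega))
  have hch : (c j :: (M ++ c i :: (Q ++ [c j]))).IsChain A := by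
    rw [hclosed, List.isChain_map]
    refine (List.isChain_range' d (m + 1) 1).imp ?_
    rintro s _ rfl
    exact hfA s
  have hrange : ∀ v, v ∈ (c j :: (M ++ c i :: Q)).toFinset ↔ v ∈ Set.range c := by
    intro v
    rw [hlist, List.mem_toFinset, List.mem_map]
    constructor
    · rintro ⟨k, -, rfl⟩
      exact ⟨_, rfl⟩
    · intro hv
      obtain ⟨k, h₁, h₂, h₃⟩ := hfsurj v hv
      exact ⟨k, List.mem_range'_1.2 ⟨h₁, h₂⟩, h₃⟩
  have hFcard : (c j :: (M ++ c i :: Q)).toFinset.card = m := by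
    rw [List.toFinset_card_of_nodup hnd, hlist]; simp
  have hz : z ∈ c j :: (M ++ [c i]) := by
    have h₁ := (hrange z).2 hzc
    have h₂ : z ∉ Q := by
      intro h
      obtain ⟨k, hk, hkz⟩ := List.mem_map.1 h
      rw [List.mem_range'_1] at hk
      refine hzavoid (k - m) (by omega) (by omega) ?_
      rw [← hkz, show k = m + (k - m) by omega, hfm]
      simp [f]
    simp at h₁ ⊢; tauto
  have hpout : ∀ k (h₁ : 1 ≤ k) (h₂ : k + 1 < r),
      p ⟨k, by omega⟩ ∉ (c j :: (M ++ c i :: Q)).toFinset := by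
    intro k h₁ h₂ h
    have h₃ : p ⟨k, by omega⟩ ∈ Set.range p ∩ Set.range c := ⟨⟨_, rfl⟩, (hrange _).1 h⟩
    rw [hmeet, ← hp0, ← hpl] at h₃
    rcases h₃ with h₃ | h₃
    · have := congrArg Fin.val (hp.1 h₃); simp at this; omega
    · have := congrArg Fin.val (hp.1 h₃); simp at this; omega
  have hreach : ∀ k (h : k + 2 < r),
      ReachIn A (((c j :: (M ++ c i :: Q)).toFinsetᶜ : Finset V) : Set V)
        (p ⟨1, by omega⟩) (p ⟨k + 1, by omega⟩) := by
    intro k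
    induction k with
    | zero => intro _; exact .refl
    | succ k ih =>
      intro h
      refine (ih (by omega)).tail ⟨?_, ?_, hp.2 ⟨k + 1, by omega⟩ (by simp; omega)⟩
      · exact Finset.mem_coe.2 (Finset.mem_compl.2 (hpout (k + 1) (by omega) (by omega)))
      · exact Finset.mem_coe.2 (Finset.mem_compl.2 (hpout (k + 2) (by omega) (by omega)))
  refine no_bypass hirr hdeg _ ?_ (c i) (c j) M Q rfl hnd hch hz _ _ (hreach (r - 3) (by omega))
    (hpout 1 le_rfl (by omega)) (hpout _ (by omega) (by omega)) ?_ ?_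
  · intro x l hn hc hzl
    by_contra hlt
    rw [hFcard] at hlt
    refine hno ⟨_, _, by omega, exists_isCycle_of_isChain ?_ hn hc, ?_⟩
    · rintro rfl
      rw [List.length_singleton] at hlt
      omega
    · obtain ⟨k, hk, e⟩ := List.getElem_of_mem hzl
      exact ⟨⟨k, hk⟩, e⟩
  · rw [← hp0]
    exact hp.2 ⟨0, by omega⟩ (by simp; omega)
  · rw [← hpl]
    have h := hp.2 ⟨r - 3 + 1, by omega⟩ (by simp; omega)
    have e : (⟨r - 3 + 1 + 1, by omega⟩ : Fin r) = ⟨r - 1, by omega⟩ := Fin.ext (by simp; omega)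
    rwa [← e]
end

section
/- Let D be a 2-strong digraph of order n. Suppose that n−1 vertices of D have degree at least n and the remaining vertex z has degree at least n−4. If D contains a directed cycle of length n−2 through z, then D is Hamiltonian. -/
open Finset

/-- The list `c a, c (a + 1), …, c b`. -/
def listSegment {V : Type*} (c : ℕ → V) (a b : ℕ) : List V :=
  (List.range' a (b + 1 - a)).map c

section Lists

variable {V : Type*} {A : V → V → Prop}

@[simp] lemma length_segment (c : ℕ → V) (a b : ℕ) : (listSegment c a b).length = b + 1 - a := by
  simp [listSegment]

lemma mem_segment {c : ℕ → V} {a b : ℕ} {v : V} :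
    v ∈ listSegment c a b ↔ ∃ i, a ≤ i ∧ i ≤ b ∧ c i = v := by
  simp only [listSegment, List.mem_map, List.mem_range'_1]
  constructor
  · rintro ⟨i, h, rfl⟩
    exact ⟨i, by omega, by omega, rfl⟩
  · rintro ⟨i, h1, h2, rfl⟩
    exact ⟨i, by omega, rfl⟩

lemma apply_mem_segment (c : ℕ → V) {a b i : ℕ} (h1 : a ≤ i) (h2 : i ≤ b) :
    c i ∈ listSegment c a b :=
  mem_segment.2 ⟨i, h1, h2, rfl⟩

lemma segment_eq_cons (c : ℕ → V) {a b : ℕ} (h : a ≤ b) :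
    listSegment c a b = c a :: listSegment c (a + 1) b := by
  unfold listSegment
  rw [show b + 1 - a = (b + 1 - (a + 1)) + 1 by omega, List.range'_succ]
  simp

lemma isChain_cons_segment {c : ℕ → V} {a b : ℕ} {v : V} {l : List V} (hv : A v (c a))
    (hab : a ≤ b) (hstep : ∀ i, a ≤ i → i < b → A (c i) (c (i + 1)))
    (hl : List.IsChain A (c b :: l)) : List.IsChain A (v :: (listSegment c a b ++ l)) := by
  obtain ⟨d, rfl⟩ := Nat.exists_eq_add_of_le hab
  induction d generalizing a v with
  | zero =>
    have : listSegment c a (a + 0) = [c a] := by simp [listSegment]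
    rw [this]
    exact List.isChain_cons_cons.2 ⟨hv, hl⟩
  | succ d ih =>
    rw [segment_eq_cons c hab]
    refine List.isChain_cons_cons.2 ⟨hv, ?_⟩
    rw [show a + (d + 1) = a + 1 + d by omega] at *
    exact ih (hstep a le_rfl (by omega)) (by omega) (fun i h1 h2 ↦ hstep i (by omega) h2) hl

lemma isChain_pair {u v : V} (h : A u v) : List.IsChain A [u, v] := by simpa using h

lemma exists_periodic_of_isChain {v : V} {r : List V} (h : List.IsChain A (v :: (r ++ [v]))) :
    ∃ c : ℕ → V, (∀ i, A (c i) (c (i + 1))) ∧ (∀ i, c (i + (r.length + 1)) = c i) ∧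
      ∀ i (hi : i < (v :: (r ++ [v])).length), (v :: (r ++ [v]))[i] = c i := by
  have hlt (i : ℕ) : i % (r.length + 1) < (v :: (r ++ [v])).length := by
    have : i % (r.length + 1) < r.length + 1 := Nat.mod_lt i (Nat.succ_pos r.length)
    simp
    omega
  have key : ∀ i (hi : i < (v :: (r ++ [v])).length),
      (v :: (r ++ [v]))[i] = (v :: (r ++ [v]))[i % (r.length + 1)]'(hlt i) := by
    intro i hi
    simp only [List.length_cons, List.length_append, List.length_nil] at hi
    rcases Nat.lt_or_ge i (r.length + 1) with h1 | h1
    · simp only [Nat.mod_eq_of_lt h1]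
    · obtain rfl : i = r.length + 1 := by omega
      simp
  refine ⟨fun i ↦ (v :: (r ++ [v]))[i % (r.length + 1)]'(hlt i), fun i ↦ ?_, fun i ↦ ?_, key⟩
  · have h1 : i % (r.length + 1) < r.length + 1 := Nat.mod_lt i (Nat.succ_pos r.length)
    have h2 : i % (r.length + 1) + 1 < (v :: (r ++ [v])).length := by
      simp
      omega
    have h3 := h.getElem (i % (r.length + 1)) h2
    rw [key _ h2] at h3
    simpa using h3
  · simp

lemma exists_periodic_index {c : ℕ → V} {N : ℕ} (hper : ∀ i, c (i + N) = c i) {u : V}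
    (hu : ∃ j < N, c j = u) (i : ℕ) : ∃ j, i ≤ j ∧ j < i + N ∧ c j = u := by
  induction i with
  | zero =>
    obtain ⟨j, h1, h2⟩ := hu
    exact ⟨j, by omega, by omega, h2⟩
  | succ i ih =>
    obtain ⟨j, h1, h2, h3⟩ := ih
    rcases Nat.eq_or_lt_of_le h1 with rfl | h
    · exact ⟨i + N, by omega, by omega, by rw [hper, h3]⟩
    · exact ⟨j, h, by omega, h3⟩

open Classical in
/-- The number of arcs between `w` and a closed walk, counted along the gaps of the walk. -/
lemma degree_le_sum {w : V} {c : ℕ → V} {N : ℕ} (E : Finset V)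
    (hE : ∀ v, A w v ∨ A v w → v ∈ E ∨ ∃ i < N, c i = v) (hper : c N = c 0) :
    degree A w ≤
      ∑ i ∈ range N, ((if A (c i) w then 1 else 0) + (if A w (c (i + 1)) then 1 else 0)) +
      ∑ e ∈ E, ((if A w e then 1 else 0) + (if A e w then 1 else 0)) := by
  have hin : {v | A v w}.ncard ≤
      #{i ∈ range N | A (c i) w} + #{e ∈ E | A e w} := by
    have hsub : {v | A v w} ⊆
        ↑((({i ∈ range N | A (c i) w} : Finset ℕ).image c) ∪ {e ∈ E | A e w}) := by
      intro v hv
      have hv' : A v w := hv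
      simp only [coe_union, coe_image, Set.mem_union, Set.mem_image, mem_coe, mem_filter, mem_range]
      rcases hE v (Or.inr hv') with h | ⟨i, hi, rfl⟩
      · exact Or.inr ⟨h, hv'⟩
      · exact Or.inl ⟨i, ⟨hi, hv'⟩, rfl⟩
    refine (Set.ncard_le_ncard hsub (Finset.finite_toSet _)).trans ?_
    rw [Set.ncard_coe_finset]
    exact (card_union_le _ _).trans (Nat.add_le_add_right card_image_le _)
  have hout : {v | A w v}.ncard ≤
      #{i ∈ range N | A w (c (i + 1))} + #{e ∈ E | A w e} := by
    have hsub : {v | A w v} ⊆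
        ↑((({i ∈ range N | A w (c (i + 1))} : Finset ℕ).image fun i ↦ c (i + 1)) ∪
          {e ∈ E | A w e}) := by
      intro v hv
      have hv' : A w v := hv
      simp only [coe_union, coe_image, Set.mem_union, Set.mem_image, mem_coe, mem_filter, mem_range]
      rcases hE v (Or.inl hv') with h | ⟨i, hi, rfl⟩
      · exact Or.inr ⟨h, hv'⟩
      · refine Or.inl ?_
        rcases Nat.eq_zero_or_pos i with rfl | h0
        · refine ⟨N - 1, ⟨by omega, ?_⟩, ?_⟩ <;> rw [show N - 1 + 1 = N by omega, hper]
          exact hv'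
        · refine ⟨i - 1, ⟨by omega, ?_⟩, ?_⟩ <;> rw [show i - 1 + 1 = i by omega]
          exact hv'
    refine (Set.ncard_le_ncard hsub (Finset.finite_toSet _)).trans ?_
    rw [Set.ncard_coe_finset]
    exact (card_union_le _ _).trans (Nat.add_le_add_right card_image_le _)
  simp only [card_filter] at hin hout
  simp only [sum_add_distrib]
  unfold degree
  omega

end Lists

section Hamiltonian

variable {V : Type*} [Fintype V] {A : V → V → Prop}

lemma isHamiltonian_of_isChain {v : V} {r : List V} (h : List.IsChain A (v :: (r ++ [v])))
    (h2 : 2 ≤ Fintype.card V) (hlen : r.length + 1 = Fintype.card V)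
    (hcov : ∀ w, w ∈ v :: r) : IsHamiltonian A := by
  obtain ⟨c, hc, hper, hget⟩ := exists_periodic_of_isChain h
  rw [hlen] at hper
  have hsurj : Function.Surjective fun i : Fin (Fintype.card V) ↦ c i := by
    intro w
    obtain ⟨i, hi, rfl⟩ := List.getElem_of_mem (hcov w)
    refine ⟨⟨i, by simpa [hlen] using hi⟩, ?_⟩
    have hi' : i < (v :: (r ++ [v])).length := by
      simp at hi ⊢
      omega
    change c i = _
    rw [← hget i hi']
    simp only [← List.cons_append]
    exact List.getElem_append_left hi
  have hbij := (Fintype.bijective_iff_surjective_and_card _).2 ⟨hsurj, by simp⟩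
  refine ⟨fun i ↦ c i, ⟨h2, hbij.injective, fun i ↦ ?_⟩, hsurj⟩
  have hi := i.2
  rcases Nat.lt_or_ge (i.val + 1) (Fintype.card V) with h1 | h1
  · simpa [Nat.mod_eq_of_lt h1] using hc i
  · have h3 : i.val + 1 = Fintype.card V := by omega
    have h4 := hc i
    have h5 := hper 0
    rw [h3] at h4
    rw [zero_add] at h5
    simpa [h3, ← h5] using h4

lemma IsHamiltonian.of_flip (h : IsHamiltonian (flip A)) : IsHamiltonian A := by
  obtain ⟨c, ⟨h2, hinj, hc⟩, hsurj⟩ := h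
  refine ⟨fun i ↦ c i.rev, ⟨h2, fun i j hij ↦ Fin.rev_injective (hinj hij), fun i ↦ ?_⟩,
    hsurj.comp Fin.rev_surjective⟩
  have hi := i.2
  have h1 := hc (Fin.rev ⟨(i.val + 1) % Fintype.card V, Nat.mod_lt _ i.pos⟩)
  suffices h2 : (⟨((Fin.rev ⟨(i.val + 1) % Fintype.card V, Nat.mod_lt _ i.pos⟩ :
      Fin (Fintype.card V)).val + 1) % Fintype.card V, Nat.mod_lt _ i.pos⟩ :
      Fin (Fintype.card V)) = i.rev by
    rw [h2] at h1
    exact h1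
  ext
  simp only [Fin.val_rev]
  rcases Nat.lt_or_ge (i.val + 1) (Fintype.card V) with h3 | h3
  · rw [Nat.mod_eq_of_lt h3, Nat.mod_eq_of_lt (by omega)]
    omega
  · rw [show i.val + 1 = Fintype.card V by omega, Nat.mod_self,
      show Fintype.card V - (0 + 1) + 1 = Fintype.card V by omega, Nat.mod_self]
    omega

/-- A vertex of degree at least the order can be inserted into a cycle through all other
vertices. -/
lemma isHamiltonian_of_isChain_of_degree {w v : V} {r : List V} (hirr : ∀ u, ¬ A u u)
    (h : List.IsChain A (v :: (r ++ [v]))) (hlen : r.length + 2 = Fintype.card V)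
    (hcov : ∀ u, u ≠ w → u ∈ v :: r) (hw : Fintype.card V ≤ degree A w) :
    IsHamiltonian A := by
  classical
  obtain ⟨c, hc, hper, hget⟩ := exists_periodic_of_isChain h
  have hcov' : ∀ u, u ≠ w → ∃ i < r.length + 1, c i = u := by
    intro u hu
    obtain ⟨i, hi, rfl⟩ := List.getElem_of_mem (hcov u hu)
    refine ⟨i, by simpa using hi, ?_⟩
    have hi' : i < (v :: (r ++ [v])).length := by
      simp at hi ⊢
      omega
    rw [← hget i hi']
    simp only [← List.cons_append]
    exact List.getElem_append_left hi
  obtain ⟨i, h1, h2⟩ : ∃ i, A (c i) w ∧ A w (c (i + 1)) := by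
    by_contra! hno
    have h1 := degree_le_sum (A := A) (w := w) (c := c) (N := r.length + 1) ∅ (by
      rintro u (hu | hu) <;> refine Or.inr (hcov' u ?_) <;> rintro rfl <;> exact hirr _ hu)
      (by simpa using hper 0)
    have h2 := sum_le_card_nsmul (range (r.length + 1))
      (fun i ↦ (if A (c i) w then 1 else 0) + (if A w (c (i + 1)) then 1 else 0)) 1
      (fun i _ ↦ by
        have := hno i
        by_cases h3 : A (c i) w <;> simp_all
        split_ifs <;> simp)
    simp at h1 h2
    omega
  refine isHamiltonian_of_isChain (v := w)
    (r := listSegment c (i + 1) (i + (r.length + 1)) ++ []) ?_ (by omega) ?_ ?_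
  · rw [List.append_assoc]
    refine isChain_cons_segment h2 (by omega) (fun i _ _ ↦ hc i) ?_
    rw [hper]
    exact isChain_pair h1
  · simp
    omega
  · intro u
    by_cases hu : u = w
    · simp [hu]
    · obtain ⟨j, h3, h4, rfl⟩ := exists_periodic_index hper (hcov' u hu) (i + 1)
      simp [apply_mem_segment c h3 (show j ≤ i + (r.length + 1) by omega)]

end Hamiltonian

section Twins

variable {V : Type*} [Fintype V] {A : V → V → Prop}

/-- If a cycle misses only `x` and `y`, neither of which can be inserted without making the
digraph Hamiltonian, then each gap of the cycle carries exactly one arc to `x`. -/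
lemma gap_of_periodic {x y : V} {c : ℕ → V} {N : ℕ} (hirr : ∀ u, ¬ A u u)
    (hN : 1 ≤ N) (hcard : N + 2 = Fintype.card V) (hc : ∀ i, A (c i) (c (i + 1)))
    (hper : ∀ i, c (i + N) = c i) (hcov : ∀ u, u ≠ x → u ≠ y → ∃ i < N, c i = u)
    (hx : Fintype.card V ≤ degree A x) (hy : Fintype.card V ≤ degree A y)
    (H : ¬ IsHamiltonian A) :
    A x y ∧ A y x ∧ ∀ i, A x (c (i + 1)) ↔ ¬ A (c i) x := by
  classical
  have hno : ∀ i, A (c i) x → ¬ A x (c (i + 1)) := by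
    intro i h1 h2
    refine H (isHamiltonian_of_isChain_of_degree (w := y) (v := x)
      (r := listSegment c (i + 1) (i + N)) hirr ?_ ?_ ?_ hy)
    · refine isChain_cons_segment h2 (by omega) (fun i _ _ ↦ hc i) ?_
      rw [hper]
      exact isChain_pair h1
    · simp
      omega
    · intro u hu
      by_cases hux : u = x
      · simp [hux]
      · obtain ⟨j, h3, h4, rfl⟩ := exists_periodic_index hper (hcov u hux hu) (i + 1)
        exact List.mem_cons_of_mem _ (apply_mem_segment c h3 (by omega))
  have hle : ∀ i, (if A (c i) x then 1 else 0) + (if A x (c (i + 1)) then 1 else 0) ≤ 1 := by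
    intro i
    have := hno i
    by_cases h3 : A (c i) x <;> simp_all
    split_ifs <;> simp
  have h1 := degree_le_sum (A := A) (w := x) (c := c) (N := N) {y} (by
    intro u hu
    by_cases huy : u = y
    · simp [huy]
    · refine Or.inr (hcov u ?_ huy)
      rintro rfl
      rcases hu with hu | hu <;> exact hirr _ hu) (by simpa using hper 0)
  rw [sum_singleton] at h1
  have h2 := sum_le_card_nsmul (range N)
      (fun i ↦ (if A (c i) x then 1 else 0) + (if A x (c (i + 1)) then 1 else 0)) 1
      (fun i _ ↦ hle i)
  simp only [card_range, smul_eq_mul, mul_one] at h2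
  have hxy : A x y := by
    by_contra h
    simp only [h, if_false] at h1
    split_ifs at h1 <;> omega
  have hyx : A y x := by
    by_contra h
    simp only [h, if_false] at h1
    split_ifs at h1
    omega
  refine ⟨hxy, hyx, ?_⟩
  have hlt : ∀ i < N, ¬ A (c i) x → A x (c (i + 1)) := by
    intro i hi h3
    by_contra h4
    have h5 := sum_lt_sum (s := range N) (fun i _ ↦ hle i)
      ⟨i, mem_range.2 hi, by simp [h3, h4]⟩
    simp only [sum_const, card_range, smul_eq_mul, mul_one] at h5
    simp only [hxy, hyx, if_true] at h1
    omega
  intro i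
  have hp : Function.Periodic c (i / N * N) := Function.Periodic.nat_mul hper _
  have e1 : c i = c (i % N) := by
    conv_lhs => rw [← Nat.mod_add_div' i N]
    exact hp _
  have e2 : c (i + 1) = c (i % N + 1) := by
    conv_lhs => rw [← Nat.mod_add_div' i N, Nat.add_right_comm]
    exact hp _
  exact ⟨fun h h' ↦ hno i h' h, fun h ↦ by
    rw [e2]
    exact hlt _ (Nat.mod_lt _ hN) (e1 ▸ h)⟩

/-- In a non-Hamiltonian digraph, two vertices of large degree missed by a cycle are twins with
respect to that cycle, and arcs from the cycle to them persist along the cycle except at `z`. -/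
lemma twins_of_periodic {x y z : V} {c : ℕ → V} {N : ℕ} (hirr : ∀ u, ¬ A u u)
    (hN : 2 ≤ N) (hcard : N + 2 = Fintype.card V) (hc : ∀ i, A (c i) (c (i + 1)))
    (hper : ∀ i, c (i + N) = c i) (hcov : ∀ u, u ≠ x → u ≠ y → ∃ i < N, c i = u)
    (hdeg : ∀ v, v ≠ z → Fintype.card V ≤ degree A v) (hxz : x ≠ z) (hyz : y ≠ z)
    (H : ¬ IsHamiltonian A) :
    A x y ∧ A y x ∧ (∀ i, A x (c (i + 1)) ↔ ¬ A (c i) x) ∧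
      (∀ i, A y (c (i + 1)) ↔ ¬ A (c i) y) ∧ (∀ i, A (c i) x ↔ A (c i) y) ∧
      ∀ i, A (c i) x → ¬ A (c (i + 1)) x → c (i + 1) = z := by
  have hcov' : ∀ u, u ≠ y → u ≠ x → ∃ i < N, c i = u := fun u h1 h2 ↦ hcov u h2 h1
  obtain ⟨hxy, hyx, gx⟩ := gap_of_periodic hirr (by omega) hcard hc hper hcov
    (hdeg x hxz) (hdeg y hyz) H
  obtain ⟨-, -, gy⟩ := gap_of_periodic hirr (by omega) hcard hc hper hcov'
    (hdeg y hyz) (hdeg x hxz) H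
  have key : ∀ {x y : V}, A x y → (∀ u, u ≠ x → u ≠ y → ∃ i < N, c i = u) →
      ∀ i, A (c i) x → ¬ A y (c (i + 1)) := by
    intro x y hxy hcov i h1 h2
    refine H (isHamiltonian_of_isChain (v := x)
      (r := y :: listSegment c (i + 1) (i + N)) ?_ (by omega) ?_ ?_)
    · refine List.isChain_cons_cons.2 ⟨hxy, ?_⟩
      refine isChain_cons_segment h2 (by omega) (fun i _ _ ↦ hc i) ?_
      rw [hper]
      exact isChain_pair h1
    · simp
      omega
    · intro u
      by_cases hux : u = x
      · simp [hux]
      by_cases huy : u = y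
      · simp [huy]
      obtain ⟨j, h3, h4, rfl⟩ := exists_periodic_index hper (hcov u hux huy) (i + 1)
      exact List.mem_cons_of_mem _ (List.mem_cons_of_mem _ (apply_mem_segment c h3 (by omega)))
  have htwin : ∀ i, A (c i) x ↔ A (c i) y := fun i ↦
    ⟨fun h ↦ by
      by_contra h'
      exact key hxy hcov i h ((gy i).2 h'),
    fun h ↦ by
      by_contra h'
      exact key hyx hcov' i h ((gx i).2 h')⟩
  refine ⟨hxy, hyx, gx, gy, htwin, fun i h1 h2 ↦ ?_⟩
  by_contra hz
  refine H (isHamiltonian_of_isChain_of_degree (w := c (i + 1)) (v := x)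
    (r := y :: listSegment c (i + 2) (i + N)) hirr ?_ ?_ ?_ (hdeg _ hz))
  · refine List.isChain_cons_cons.2 ⟨hxy, ?_⟩
    refine isChain_cons_segment ((gy (i + 1)).2 fun h ↦ h2 ((htwin _).2 h)) (by omega)
      (fun i _ _ ↦ hc i) ?_
    rw [hper]
    exact isChain_pair h1
  · simp
    omega
  · intro u hu
    by_cases hux : u = x
    · simp [hux]
    by_cases huy : u = y
    · simp [huy]
    obtain ⟨j, h3, h4, rfl⟩ := exists_periodic_index hper (hcov u hux huy) (i + 1)
    have : j ≠ i + 1 := by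
      rintro rfl
      exact hu rfl
    exact List.mem_cons_of_mem _
      (List.mem_cons_of_mem _ (apply_mem_segment c (by omega) (by omega)))

lemma IsKStrong.exists_exit (h : IsKStrong A 2) (w : V) (U : Set V) (hw : w ∉ U)
    (hU : U.Nonempty) (hb : ∃ b, b ∉ U ∧ b ≠ w) : ∃ u ∈ U, ∃ v, v ∉ U ∧ v ≠ w ∧ A u v := by
  obtain ⟨a, ha⟩ := hU
  obtain ⟨b, hb, hbw⟩ := hb
  have hr := h.2 {w} (by simp) a (by rintro rfl; exact hw ha) b hbw
  by_contra! hno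
  have : b ∈ U := by
    unfold ReachIn at hr
    clear hb hbw
    induction hr with
    | refl => exact ha
    | tail _ h1 ih =>
      by_contra h2
      exact hno _ ih _ h2 h1.2.1 h1.2.2
  exact hb this

end Twins

section Core

/-- A cycle `z, c 1, …, c (m - 1)` missing exactly two vertices `x` and `y` of large degree, such
that `x` and `y` dominate exactly `c 1, …, c k` and are dominated exactly by
`c k, …, c (m - 1)`. -/
structure TwinConfig {V : Type*} [Fintype V] (A : V → V → Prop) (z x y : V) (c : ℕ → V)
    (m k : ℕ) : Prop where
  irr : ∀ u, ¬ A u u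
  card : m + 2 = Fintype.card V
  exit : ∀ (w : V) (U : Set V), w ∉ U → U.Nonempty → (∃ b, b ∉ U ∧ b ≠ w) →
    ∃ u ∈ U, ∃ v, v ∉ U ∧ v ≠ w ∧ A u v
  deg : ∀ v, v ≠ z → Fintype.card V ≤ degree A v
  degz : m ≤ degree A z + 2
  cover : ∀ v, v = x ∨ v = y ∨ v = z ∨ ∃ i, 1 ≤ i ∧ i < m ∧ c i = v
  inj : ∀ i j, 1 ≤ i → i < m → 1 ≤ j → j < m → c i = c j → i = j
  ne_x : ∀ i, 1 ≤ i → i < m → c i ≠ x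
  ne_y : ∀ i, 1 ≤ i → i < m → c i ≠ y
  ne_z : ∀ i, 1 ≤ i → i < m → c i ≠ z
  x_ne_y : x ≠ y
  x_ne_z : x ≠ z
  y_ne_z : y ≠ z
  step : ∀ i, 1 ≤ i → i + 1 < m → A (c i) (c (i + 1))
  z_first : A z (c 1)
  last_z : A (c (m - 1)) z
  xy : A x y
  yx : A y x
  x_out : ∀ i, 1 ≤ i → i < m → (A x (c i) ↔ i ≤ k)
  y_out : ∀ i, 1 ≤ i → i < m → (A y (c i) ↔ i ≤ k)
  x_in : ∀ i, 1 ≤ i → i < m → (A (c i) x ↔ k ≤ i)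
  y_in : ∀ i, 1 ≤ i → i < m → (A (c i) y ↔ k ≤ i)
  not_zx : ¬ A z x
  not_xz : ¬ A x z
  not_zy : ¬ A z y
  not_yz : ¬ A y z
  one_le : 1 ≤ k
  lt : k < m

namespace TwinConfig

variable {V : Type*} [Fintype V] {A : V → V → Prop} {z x y : V} {c : ℕ → V} {m k : ℕ}

lemma reverse (C : TwinConfig A z x y c m k) :
    TwinConfig (flip A) z x y (fun i ↦ c (m - i)) m (m - k) where
  irr := C.irr
  card := C.card
  exit := by
    rintro w U hw ⟨a, ha⟩ ⟨b, hb, hbw⟩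
    obtain ⟨u, hu, v, hv, hvw, huv⟩ := C.exit w {v | v ∉ U ∧ v ≠ w} (by simp) ⟨b, hb, hbw⟩
      ⟨a, by simp [ha], by rintro rfl; exact hw ha⟩
    refine ⟨v, ?_, u, hu.1, hu.2, huv⟩
    by_contra h
    exact hv ⟨h, hvw⟩
  deg v hv := by
    have := C.deg v hv
    unfold degree at this ⊢
    simp only [flip]
    omega
  degz := by
    have := C.degz
    unfold degree at this ⊢
    simp only [flip]
    omega
  cover v := by
    rcases C.cover v with h | h | h | ⟨i, h1, h2, rfl⟩
    · exact Or.inl h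
    · exact Or.inr (Or.inl h)
    · exact Or.inr (Or.inr (Or.inl h))
    · exact Or.inr (Or.inr (Or.inr ⟨m - i, by omega, by omega, by
        simp only [show m - (m - i) = i by omega]⟩))
  inj i j h1 h2 h3 h4 h := by
    have := C.inj _ _ (by omega) (by omega) (by omega) (by omega) h
    omega
  ne_x i h1 h2 := C.ne_x _ (by omega) (by omega)
  ne_y i h1 h2 := C.ne_y _ (by omega) (by omega)
  ne_z i h1 h2 := C.ne_z _ (by omega) (by omega)
  x_ne_y := C.x_ne_y
  x_ne_z := C.x_ne_z
  y_ne_z := C.y_ne_z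
  step i h1 h2 := by
    have := C.step (m - (i + 1)) (by omega) (by omega)
    rwa [show m - (i + 1) + 1 = m - i by omega] at this
  z_first := C.last_z
  last_z := by
    have := C.z_first
    have := C.one_le
    have := C.lt
    simp only [flip, show m - (m - 1) = 1 by omega]
    assumption
  xy := C.yx
  yx := C.xy
  x_out i h1 h2 := (C.x_in _ (by omega) (by omega)).trans (by have := C.lt; omega)
  y_out i h1 h2 := (C.y_in _ (by omega) (by omega)).trans (by have := C.lt; omega)
  x_in i h1 h2 := (C.x_out _ (by omega) (by omega)).trans (by have := C.lt; omega)
  y_in i h1 h2 := (C.y_out _ (by omega) (by omega)).trans (by have := C.lt; omega)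
  not_zx := C.not_xz
  not_xz := C.not_zx
  not_zy := C.not_yz
  not_yz := C.not_zy
  one_le := by have := C.lt; omega
  lt := by have := C.lt; have := C.one_le; omega

lemma isHamiltonian (C : TwinConfig A z x y c m k) {v : V} {r : List V}
    (h : List.IsChain A (v :: (r ++ [v]))) (hlen : r.length + 1 = m + 2)
    (hx : x ∈ v :: r) (hy : y ∈ v :: r) (hz : z ∈ v :: r)
    (hcov : ∀ i, 1 ≤ i → i < m → c i ∈ v :: r) : IsHamiltonian A := by
  have := C.card
  refine isHamiltonian_of_isChain h (by omega) (by omega) fun w ↦ ?_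
  rcases C.cover w with rfl | rfl | rfl | ⟨i, h1, h2, rfl⟩
  exacts [hx, hy, hz, hcov i h1 h2]

lemma isHamiltonian_of_miss (C : TwinConfig A z x y c m k) {v : V} {r : List V} (j : ℕ)
    (hj1 : 1 ≤ j) (hjm : j < m)
    (h : List.IsChain A (v :: (r ++ [v]))) (hlen : r.length + 1 = m + 1)
    (hx : x ∈ v :: r) (hy : y ∈ v :: r) (hz : z ∈ v :: r)
    (hcov : ∀ i, 1 ≤ i → i < m → i ≠ j → c i ∈ v :: r) : IsHamiltonian A := by
  have := C.card
  refine isHamiltonian_of_isChain_of_degree (w := c j) C.irr h (by omega) (fun w hw ↦ ?_)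
    (C.deg _ (C.ne_z j hj1 hjm))
  rcases C.cover w with rfl | rfl | rfl | ⟨i, h1, h2, rfl⟩
  · exact hx
  · exact hy
  · exact hz
  · exact hcov i h1 h2 fun h ↦ hw (by rw [h])

lemma isHamiltonian_of_insert (C : TwinConfig A z x y c m k) {i : ℕ} (h1 : 1 ≤ i)
    (h2 : i + 1 < m) (hs : A (c i) z) (ht : A z (c (i + 1))) : IsHamiltonian A := by
  have hk := C.one_le
  have hkm := C.lt
  refine C.isHamiltonian (v := x) (r := y :: (listSegment c 1 i ++ z ::
    (listSegment c (i + 1) (m - 1)))) ?_ (by simp; omega) (by simp) (by simp) (by simp) ?_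
  · simp only [List.cons_append, List.append_assoc]
    refine List.isChain_cons_cons.2 ⟨C.xy, ?_⟩
    refine isChain_cons_segment ((C.y_out _ ?_ ?_).2 ?_) ?_ (fun j _ _ ↦ C.step j ?_ ?_) ?_
    any_goals omega
    refine List.isChain_cons_cons.2 ⟨hs, ?_⟩
    refine isChain_cons_segment ht ?_ (fun j _ _ ↦ C.step j ?_ ?_) ?_
    any_goals omega
    refine isChain_pair ((C.x_in _ ?_ ?_).2 ?_) <;> omega
  · intro j h3 h4
    rcases (by omega : (1 ≤ j ∧ j ≤ i) ∨ (i + 1 ≤ j ∧ j ≤ m - 1)) with h | h <;>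
      simp [apply_mem_segment c h.1 h.2]

lemma isHamiltonian_of_replace (C : TwinConfig A z x y c m k) {i : ℕ} (h1 : 1 ≤ i)
    (h2 : i + 2 < m) (hs : A (c i) z) (ht : A z (c (i + 2))) :
    IsHamiltonian A := by
  have hk := C.one_le
  have hkm := C.lt
  refine C.isHamiltonian_of_miss (i + 1) (by omega) (by omega) (v := x)
    (r := (y :: (listSegment c 1 i ++ z :: listSegment c (i + 2) (m - 1))))
    ?_ (by simp; omega) (by simp) (by simp) (by simp) ?_
  · simp only [List.cons_append, List.append_assoc]
    refine List.isChain_cons_cons.2 ⟨C.xy, ?_⟩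
    refine isChain_cons_segment ((C.y_out _ ?_ ?_).2 ?_) ?_ (fun j _ _ ↦ C.step j ?_ ?_) ?_
    any_goals omega
    refine List.isChain_cons_cons.2 ⟨hs, ?_⟩
    refine isChain_cons_segment ht ?_ (fun j _ _ ↦ C.step j ?_ ?_) ?_
    any_goals omega
    refine isChain_pair ((C.x_in _ ?_ ?_).2 ?_) <;> omega
  · intro j h3 h4 h5
    rcases (by omega : (1 ≤ j ∧ j ≤ i) ∨ ((i + 2) ≤ j ∧ j ≤ (m - 1))) with
      h | h <;>
      simp [apply_mem_segment c h.1 h.2]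

lemma isHamiltonian_of_bypass (C : TwinConfig A z x y c m k) {p q : ℕ} (h1 : 1 ≤ p)
    (h2 : p < k) (h3 : k < q) (h4 : q < m) (hs : A (c p) z) (ht : A z (c q)) :
    IsHamiltonian A := by
  have hk := C.one_le
  have hkm := C.lt
  refine C.isHamiltonian (v := x)
    (r := (listSegment c (p + 1) (q - 1) ++ y :: (listSegment c 1 p ++
      z :: listSegment c q (m - 1))))
    ?_ (by simp; omega) (by simp) (by simp) (by simp) ?_
  · simp only [List.cons_append, List.append_assoc]
    refine isChain_cons_segment ((C.x_out _ ?_ ?_).2 ?_) ?_ (fun j _ _ ↦ C.step j ?_ ?_) ?_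
    any_goals omega
    refine List.isChain_cons_cons.2 ⟨((C.y_in _ ?_ ?_).2 ?_), ?_⟩
    any_goals omega
    refine isChain_cons_segment ((C.y_out _ ?_ ?_).2 ?_) ?_ (fun j _ _ ↦ C.step j ?_ ?_) ?_
    any_goals omega
    refine List.isChain_cons_cons.2 ⟨hs, ?_⟩
    refine isChain_cons_segment ht ?_ (fun j _ _ ↦ C.step j ?_ ?_) ?_
    any_goals omega
    refine isChain_pair ((C.x_in _ ?_ ?_).2 ?_) <;> omega
  · intro j h3 h4
    rcases (by omega : ((p + 1) ≤ j ∧ j ≤ (q - 1)) ∨ (1 ≤ j ∧ j ≤ p) ∨ (q ≤ j ∧ j ≤ (m - 1))) with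
      h | h | h <;>
      simp [apply_mem_segment c h.1 h.2]

lemma isHamiltonian_of_jump_of_in (C : TwinConfig A z x y c m k) {u v : ℕ} (h1 : 1 ≤ u)
    (h2 : u < k) (h3 : u + 2 ≤ v) (h4 : v < m) (huv : A (c u) (c v)) (hs : A (c (v - 1)) z) :
    IsHamiltonian A := by
  have hk := C.one_le
  have hkm := C.lt
  refine C.isHamiltonian (v := x)
    (r := (y :: (listSegment c (u + 1) (v - 1) ++ z :: (listSegment c 1 u ++
      listSegment c v (m - 1)))))
    ?_ (by simp; omega) (by simp) (by simp) (by simp) ?_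
  · simp only [List.cons_append, List.append_assoc]
    refine List.isChain_cons_cons.2 ⟨C.xy, ?_⟩
    refine isChain_cons_segment ((C.y_out _ ?_ ?_).2 ?_) ?_ (fun j _ _ ↦ C.step j ?_ ?_) ?_
    any_goals omega
    refine List.isChain_cons_cons.2 ⟨hs, ?_⟩
    refine isChain_cons_segment C.z_first ?_ (fun j _ _ ↦ C.step j ?_ ?_) ?_
    any_goals omega
    refine isChain_cons_segment huv ?_ (fun j _ _ ↦ C.step j ?_ ?_) ?_
    any_goals omega
    refine isChain_pair ((C.x_in _ ?_ ?_).2 ?_) <;> omega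
  · intro j h3 h4
    rcases (by omega : ((u + 1) ≤ j ∧ j ≤ (v - 1)) ∨ (1 ≤ j ∧ j ≤ u) ∨ (v ≤ j ∧ j ≤ (m - 1))) with
      h | h | h <;>
      simp [apply_mem_segment c h.1 h.2]

lemma isHamiltonian_of_jump_of_out (C : TwinConfig A z x y c m k) {u v : ℕ} (h1 : 1 ≤ u)
    (h2 : k < v) (h3 : u + 2 ≤ v) (h4 : v < m) (huv : A (c u) (c v)) (ht : A z (c (u + 1))) :
    IsHamiltonian A := by
  have hk := C.one_le
  have hkm := C.lt
  refine C.isHamiltonian (v := x)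
    (r := (y :: (listSegment c 1 u ++ (listSegment c v (m - 1) ++
      z :: listSegment c (u + 1) (v - 1)))))
    ?_ (by simp; omega) (by simp) (by simp) (by simp) ?_
  · simp only [List.cons_append, List.append_assoc]
    refine List.isChain_cons_cons.2 ⟨C.xy, ?_⟩
    refine isChain_cons_segment ((C.y_out _ ?_ ?_).2 ?_) ?_ (fun j _ _ ↦ C.step j ?_ ?_) ?_
    any_goals omega
    refine isChain_cons_segment huv ?_ (fun j _ _ ↦ C.step j ?_ ?_) ?_
    any_goals omega
    refine List.isChain_cons_cons.2 ⟨C.last_z, ?_⟩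
    refine isChain_cons_segment ht ?_ (fun j _ _ ↦ C.step j ?_ ?_) ?_
    any_goals omega
    refine isChain_pair ((C.x_in _ ?_ ?_).2 ?_) <;> omega
  · intro j h3 h4
    rcases (by omega : (1 ≤ j ∧ j ≤ u) ∨ (v ≤ j ∧ j ≤ (m - 1)) ∨ ((u + 1) ≤ j ∧ j ≤ (v - 1))) with
      h | h | h <;>
      simp [apply_mem_segment c h.1 h.2]

lemma isHamiltonian_of_jump_of_skip (C : TwinConfig A z x y c m k) {u v : ℕ} (h1 : 1 ≤ u)
    (h2 : k < v) (h3 : u + 3 ≤ v) (h4 : v < m) (huv : A (c u) (c v)) (ht : A z (c (u + 2))) :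
    IsHamiltonian A := by
  have hk := C.one_le
  have hkm := C.lt
  refine C.isHamiltonian_of_miss (u + 1) (by omega) (by omega) (v := x)
    (r := (y :: (listSegment c 1 u ++ (listSegment c v (m - 1) ++
      z :: listSegment c (u + 2) (v - 1)))))
    ?_ (by simp; omega) (by simp) (by simp) (by simp) ?_
  · simp only [List.cons_append, List.append_assoc]
    refine List.isChain_cons_cons.2 ⟨C.xy, ?_⟩
    refine isChain_cons_segment ((C.y_out _ ?_ ?_).2 ?_) ?_ (fun j _ _ ↦ C.step j ?_ ?_) ?_
    any_goals omega
    refine isChain_cons_segment huv ?_ (fun j _ _ ↦ C.step j ?_ ?_) ?_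
    any_goals omega
    refine List.isChain_cons_cons.2 ⟨C.last_z, ?_⟩
    refine isChain_cons_segment ht ?_ (fun j _ _ ↦ C.step j ?_ ?_) ?_
    any_goals omega
    refine isChain_pair ((C.x_in _ ?_ ?_).2 ?_) <;> omega
  · intro j h3 h4 h5
    rcases (by omega : (1 ≤ j ∧ j ≤ u) ∨ (v ≤ j ∧ j ≤ (m - 1)) ∨ ((u + 2) ≤ j ∧ j ≤ (v - 1))) with
      h | h | h <;>
      simp [apply_mem_segment c h.1 h.2]

lemma isHamiltonian_of_jump_of_in_before (C : TwinConfig A z x y c m k) {u v : ℕ} (h1 : 1 ≤ u)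
    (h2 : u < k) (h3 : u + 3 ≤ v) (h4 : v < m) (huv : A (c u) (c v)) (hs : A (c (v - 2)) z) :
    IsHamiltonian A := by
  have hk := C.one_le
  have hkm := C.lt
  refine C.isHamiltonian_of_miss (v - 1) (by omega) (by omega) (v := x)
    (r := (y :: (listSegment c (u + 1) (v - 2) ++ z :: (listSegment c 1 u ++
      listSegment c v (m - 1)))))
    ?_ (by simp; omega) (by simp) (by simp) (by simp) ?_
  · simp only [List.cons_append, List.append_assoc]
    refine List.isChain_cons_cons.2 ⟨C.xy, ?_⟩
    refine isChain_cons_segment ((C.y_out _ ?_ ?_).2 ?_) ?_ (fun j _ _ ↦ C.step j ?_ ?_) ?_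
    any_goals omega
    refine List.isChain_cons_cons.2 ⟨hs, ?_⟩
    refine isChain_cons_segment C.z_first ?_ (fun j _ _ ↦ C.step j ?_ ?_) ?_
    any_goals omega
    refine isChain_cons_segment huv ?_ (fun j _ _ ↦ C.step j ?_ ?_) ?_
    any_goals omega
    refine isChain_pair ((C.x_in _ ?_ ?_).2 ?_) <;> omega
  · intro j h3 h4 h5
    rcases (by omega : ((u + 1) ≤ j ∧ j ≤ (v - 2)) ∨ (1 ≤ j ∧ j ≤ u) ∨ (v ≤ j ∧ j ≤ (m - 1))) with
      h | h | h <;>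
      simp [apply_mem_segment c h.1 h.2]

lemma isHamiltonian_of_two_jumps (C : TwinConfig A z x y c m k) {u g w : ℕ} (h1 : 1 ≤ u)
    (h2 : u < g) (h3 : g < k) (h4 : k < w) (h5 : w < m) (hug : A (c u) (c (g + 1)))
    (hgw : A (c g) (c w)) :
    IsHamiltonian A := by
  have hk := C.one_le
  have hkm := C.lt
  refine C.isHamiltonian (v := x)
    (r := (y :: (listSegment c (u + 1) g ++ (listSegment c w (m - 1) ++
      z :: (listSegment c 1 u ++ listSegment c (g + 1) (w - 1))))))
    ?_ (by simp; omega) (by simp) (by simp) (by simp) ?_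
  · simp only [List.cons_append, List.append_assoc]
    refine List.isChain_cons_cons.2 ⟨C.xy, ?_⟩
    refine isChain_cons_segment ((C.y_out _ ?_ ?_).2 ?_) ?_ (fun j _ _ ↦ C.step j ?_ ?_) ?_
    any_goals omega
    refine isChain_cons_segment hgw ?_ (fun j _ _ ↦ C.step j ?_ ?_) ?_
    any_goals omega
    refine List.isChain_cons_cons.2 ⟨C.last_z, ?_⟩
    refine isChain_cons_segment C.z_first ?_ (fun j _ _ ↦ C.step j ?_ ?_) ?_
    any_goals omega
    refine isChain_cons_segment hug ?_ (fun j _ _ ↦ C.step j ?_ ?_) ?_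
    any_goals omega
    refine isChain_pair ((C.x_in _ ?_ ?_).2 ?_) <;> omega
  · intro j h3 h4
    rcases (by omega : ((u + 1) ≤ j ∧ j ≤ g) ∨ (w ≤ j ∧ j ≤ (m - 1)) ∨ (1 ≤ j ∧ j ≤ u) ∨
        ((g + 1) ≤ j ∧ j ≤ (w - 1))) with
      h | h | h | h <;>
      simp [apply_mem_segment c h.1 h.2]

lemma isHamiltonian_of_back_arc (C : TwinConfig A z x y c m k) {u : ℕ} (h1 : 2 ≤ u)
    (h2 : u + 1 < m) (hu : A (c u) (c 1)) (h1z : A (c 1) z) (ht : A z (c (u + 1)))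
    (hk2 : 2 ≤ k) :
    IsHamiltonian A := by
  have hk := C.one_le
  have hkm := C.lt
  refine C.isHamiltonian (v := x)
    (r := (y :: (listSegment c 2 u ++ (listSegment c 1 1 ++ z :: listSegment c (u + 1) (m - 1)))))
    ?_ (by simp; omega) (by simp) (by simp) (by simp) ?_
  · simp only [List.cons_append, List.append_assoc]
    refine List.isChain_cons_cons.2 ⟨C.xy, ?_⟩
    refine isChain_cons_segment ((C.y_out _ ?_ ?_).2 ?_) ?_ (fun j _ _ ↦ C.step j ?_ ?_) ?_
    any_goals omega
    refine isChain_cons_segment hu ?_ (fun j _ _ ↦ C.step j ?_ ?_) ?_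
    any_goals omega
    refine List.isChain_cons_cons.2 ⟨h1z, ?_⟩
    refine isChain_cons_segment ht ?_ (fun j _ _ ↦ C.step j ?_ ?_) ?_
    any_goals omega
    refine isChain_pair ((C.x_in _ ?_ ?_).2 ?_) <;> omega
  · intro j h3 h4
    rcases (by omega : (2 ≤ j ∧ j ≤ u) ∨ (1 ≤ j ∧ j ≤ 1) ∨ ((u + 1) ≤ j ∧ j ≤ (m - 1))) with
      h | h | h <;>
      simp [apply_mem_segment c h.1 h.2]

lemma isHamiltonian_of_back_jump (C : TwinConfig A z x y c m k) {u v : ℕ} (h1 : 2 ≤ u)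
    (h2 : u + 2 ≤ v) (h3 : v < m) (huv : A (c u) (c v)) (h1z : A (c 1) z)
    (ht : A z (c (u + 1))) (hv2 : A (c (v - 1)) (c 2)) :
    IsHamiltonian A := by
  have hk := C.one_le
  have hkm := C.lt
  refine C.isHamiltonian (v := x)
    (r := (y :: (listSegment c 1 1 ++ z :: (listSegment c (u + 1) (v - 1) ++
      (listSegment c 2 u ++ listSegment c v (m - 1))))))
    ?_ (by simp; omega) (by simp) (by simp) (by simp) ?_
  · simp only [List.cons_append, List.append_assoc]
    refine List.isChain_cons_cons.2 ⟨C.xy, ?_⟩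
    refine isChain_cons_segment ((C.y_out _ ?_ ?_).2 ?_) ?_ (fun j _ _ ↦ C.step j ?_ ?_) ?_
    any_goals omega
    refine List.isChain_cons_cons.2 ⟨h1z, ?_⟩
    refine isChain_cons_segment ht ?_ (fun j _ _ ↦ C.step j ?_ ?_) ?_
    any_goals omega
    refine isChain_cons_segment hv2 ?_ (fun j _ _ ↦ C.step j ?_ ?_) ?_
    any_goals omega
    refine isChain_cons_segment huv ?_ (fun j _ _ ↦ C.step j ?_ ?_) ?_
    any_goals omega
    refine isChain_pair ((C.x_in _ ?_ ?_).2 ?_) <;> omega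
  · intro j h3 h4
    rcases (by omega : (1 ≤ j ∧ j ≤ 1) ∨ ((u + 1) ≤ j ∧ j ≤ (v - 1)) ∨ (2 ≤ j ∧ j ≤ u) ∨
        (v ≤ j ∧ j ≤ (m - 1))) with
      h | h | h | h <;>
      simp [apply_mem_segment c h.1 h.2]

/-- All but at most two gaps of the path `c 1, …, c (m - 1)` carry an arc to or from `z`. -/
lemma not_three_empty_gaps (C : TwinConfig A z x y c m k) (H : ¬ IsHamiltonian A) {i j l : ℕ}
    (hi : 1 ≤ i) (hij : i < j) (hjl : j < l) (hl : l + 1 < m)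
    (ei : ¬ A (c i) z ∧ ¬ A z (c (i + 1))) (ej : ¬ A (c j) z ∧ ¬ A z (c (j + 1)))
    (el : ¬ A (c l) z ∧ ¬ A z (c (l + 1))) : False := by
  classical
  set d : ℕ → V := fun i ↦ if i = 0 ∨ i = m then z else c i with hd
  have hdc : ∀ i, 1 ≤ i → i < m → d i = c i := fun i h1 h2 ↦ by
    rw [hd]
    exact if_neg (by omega)
  have hd0 : d 0 = z := by simp [hd]
  have hdm : d m = z := by simp [hd]
  set f : ℕ → ℕ := fun i ↦
    (if A (d i) z then 1 else 0) + (if A z (d (i + 1)) then 1 else 0) with hf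
  have h1 : degree A z ≤ ∑ i ∈ range m, f i := by
    have := degree_le_sum (A := A) (w := z) (c := d) (N := m) ∅ (by
      intro v hv
      refine Or.inr ?_
      rcases C.cover v with rfl | rfl | rfl | ⟨i, h1, h2, rfl⟩
      · exact (hv.elim C.not_zx C.not_xz).elim
      · exact (hv.elim C.not_zy C.not_yz).elim
      · exact ⟨0, by omega, hd0⟩
      · exact ⟨i, h2, hdc i h1 h2⟩) (by rw [hd0, hdm])
    simpa using this
  have hle : ∀ i ∈ range m, f i + (if f i = 0 then 1 else 0) ≤ 1 := by
    intro i hi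
    have hi := mem_range.1 hi
    have : ¬ (A (d i) z ∧ A z (d (i + 1))) := by
      rintro ⟨h2, h3⟩
      rcases Nat.eq_zero_or_pos i with rfl | h0
      · rw [hd0] at h2
        exact C.irr _ h2
      · rcases Nat.lt_or_ge (i + 1) m with h4 | h4
        · rw [hdc _ (by omega) (by omega)] at h2 h3
          exact H (C.isHamiltonian_of_insert h0 h4 h2 h3)
        · rw [show i + 1 = m by omega, hdm] at h3
          exact C.irr _ h3
    simp only [hf]
    by_cases h2 : A (d i) z <;> by_cases h3 : A z (d (i + 1)) <;> simp_all
  have h2 := sum_le_sum hle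
  rw [sum_add_distrib, ← card_filter] at h2
  have h3 : ({i, j, l} : Finset ℕ) ⊆ {i ∈ range m | f i = 0} := by
    intro a ha
    have hz : ∀ a, 1 ≤ a → a + 1 < m → ¬ A (c a) z ∧ ¬ A z (c (a + 1)) →
        a ∈ ({i ∈ range m | f i = 0} : Finset ℕ) := by
      intro a h4 h5 h6
      simp only [mem_filter, mem_range, hf]
      refine ⟨by omega, ?_⟩
      rw [hdc a h4 (by omega), hdc (a + 1) (by omega) h5]
      simp [h6.1, h6.2]
    simp only [mem_insert, mem_singleton] at ha
    rcases ha with rfl | rfl | rfl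
    · exact hz _ hi (by omega) ei
    · exact hz _ (by omega) (by omega) ej
    · exact hz _ (by omega) (by omega) el
  have h4 := card_le_card h3
  rw [card_eq_three.2 ⟨i, j, l, by omega, by omega, by omega, rfl⟩] at h4
  have := C.degz
  simp at h2
  omega

/-- If `z` can replace the pair `c g, c (g + 1)`, then this pair consists of twins with respect to
the resulting cycle. -/
lemma twins_of_replace_pair (C : TwinConfig A z x y c m k) (H : ¬ IsHamiltonian A) {g : ℕ}
    (hg : 2 ≤ g) (hgk : g + 2 ≤ k) (hs : A (c (g - 1)) z) (ht : A z (c (g + 2))) :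
    g = 2 ∧ (∀ i, 4 ≤ i → i + 1 < m → ¬ A (c i) (c 2) → A (c 2) (c (i + 1))) ∧
      (∀ i, 4 ≤ i → i + 1 < m → ¬ A (c i) (c 2) → A (c 3) (c (i + 1))) ∧
      (∀ i, 4 ≤ i → i + 1 < m → A (c i) (c 2) → ¬ A (c 2) (c (i + 1))) ∧
      (∀ i, 4 ≤ i → i + 1 < m → A (c i) (c 2) → A (c (i + 1)) (c 2)) ∧
      A (c (m - 1)) (c 2) ∧ ¬ A (c 2) (c 1) := by
  have hkm := C.lt
  have hcard := C.card
  obtain ⟨d, hd, hper, hget⟩ := exists_periodic_of_isChain (A := A) (v := z)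
    (r := listSegment c (g + 2) (m - 1) ++ x :: y :: listSegment c 1 (g - 1)) (by
      simp only [List.cons_append, List.append_assoc]
      refine isChain_cons_segment ht ?_ (fun j _ _ ↦ C.step j ?_ ?_) ?_
      any_goals omega
      refine List.isChain_cons_cons.2 ⟨(C.x_in _ ?_ ?_).2 ?_, List.isChain_cons_cons.2 ⟨C.xy, ?_⟩⟩
      any_goals omega
      refine isChain_cons_segment ((C.y_out _ ?_ ?_).2 ?_) ?_ (fun j _ _ ↦ C.step j ?_ ?_) ?_
      any_goals omega
      exact isChain_pair hs)
  have hlen : (listSegment c (g + 2) (m - 1) ++ x :: y :: listSegment c 1 (g - 1)).length + 1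
      = m := by
    simp
    omega
  rw [hlen] at hper
  have hlen' : (z :: (listSegment c (g + 2) (m - 1) ++ x :: y :: listSegment c 1 (g - 1) ++
      [z])).length = m + 1 := by
    simp
    omega
  have d0 : d 0 = z := (hget 0 (by omega)).symm
  have d1 : ∀ i, g + 2 ≤ i → i < m → d (i - g - 1) = c i := by
    intro i h1 h2
    rw [← hget (i - g - 1) (by omega)]
    obtain ⟨e, rfl⟩ : ∃ e, i = g + 2 + e := ⟨i - g - 2, by omega⟩
    simp [List.getElem_cons, List.getElem_append, listSegment]
    split_ifs <;> first | omega | (congr 1; omega)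
  have dx : d (m - g - 1) = x := by
    rw [← hget _ (by omega)]
    simp [List.getElem_cons, List.getElem_append, listSegment]
    split_ifs <;> first | rfl | omega
  have dy : d (m - g) = y := by
    rw [← hget _ (by omega)]
    simp [List.getElem_cons, List.getElem_append, listSegment]
    split_ifs <;> first | rfl | omega
  have d2 : ∀ i, 1 ≤ i → i < g → d (m - g + i) = c i := by
    intro i h1 h2
    rw [← hget _ (by omega)]
    simp [List.getElem_cons, List.getElem_append, listSegment]
    split_ifs <;> first | omega | (congr 1; omega)
  obtain ⟨-, -, gx, gy, htw, hz⟩ := twins_of_periodic (A := A) (x := c g) (y := c (g + 1)) (z := z)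
    C.irr (by omega) hcard hd hper (by
      intro u h1 h2
      rcases C.cover u with rfl | rfl | rfl | ⟨i, h3, h4, rfl⟩
      · exact ⟨_, by omega, dx⟩
      · exact ⟨_, by omega, dy⟩
      · exact ⟨0, by omega, d0⟩
      · have h5 : i ≠ g := by
          rintro rfl
          exact h1 rfl
        have h6 : i ≠ g + 1 := by
          rintro rfl
          exact h2 rfl
        rcases Nat.lt_or_ge i g with h7 | h7
        · exact ⟨_, by omega, d2 i h3 h7⟩
        · exact ⟨_, by omega, d1 i (by omega) h4⟩)
    C.deg (C.ne_z _ (by omega) (by omega)) (C.ne_z _ (by omega) (by omega)) H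
  have hyg : A (d (m - g)) (c g) := by
    rw [dy]
    exact (C.y_out _ (by omega) (by omega)).2 (by omega)
  have hg2 : g = 2 := by
    by_contra hne
    refine H (C.isHamiltonian_of_jump_of_in (u := 1) (v := g) le_rfl (by omega) (by omega)
      (by omega) ?_ hs)
    by_contra h1
    have h2 := hz (m - g) hyg (by rwa [d2 1 le_rfl (by omega)])
    rw [d2 1 le_rfl (by omega)] at h2
    exact C.ne_z 1 le_rfl (by omega) h2
  subst hg2
  have e1 : ∀ i, 4 ≤ i → i + 1 < m → d (i - 3 + 1) = c (i + 1) := fun i h1 h2 ↦ by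
    rw [← d1 (i + 1) (by omega) h2]
    congr 1
    omega
  have e0 : ∀ i, 4 ≤ i → i < m → d (i - 3) = c i := fun i h1 h2 ↦ by
    rw [← d1 i h1 h2]
    congr 1
  refine ⟨rfl, fun i h1 h2 h3 ↦ ?_, fun i h1 h2 h3 ↦ ?_, fun i h1 h2 h3 ↦ ?_,
    fun i h1 h2 h3 ↦ ?_, ?_, ?_⟩
  · rw [← e1 i h1 h2, gx, e0 i h1 (by omega)]
    exact h3
  · rw [← e1 i h1 h2, gy, ← htw, e0 i h1 (by omega)]
    exact h3
  · rw [← e1 i h1 h2, gx, e0 i h1 (by omega)]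
    exact not_not.2 h3
  · by_contra h4
    have := hz (i - 3) (by rwa [e0 i h1 (by omega)]) (by rwa [e1 i h1 h2])
    rw [e1 i h1 h2] at this
    exact C.ne_z _ (by omega) h2 this
  · have h1 := gx (m - 4)
    rw [show m - 4 + 1 = m - 2 - 1 by omega, dx, C.x_in 2 (by omega) (by omega)] at h1
    have h2 := e0 (m - 1) (by omega) (by omega)
    rw [show m - 1 - 3 = m - 4 by omega] at h2
    rw [h2] at h1
    by_contra h3
    have := h1.2 h3
    omega
  · have h1 := gx (m - 2)
    rw [d2 1 le_rfl (by omega)] at h1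
    exact fun h ↦ h1.1 h hyg


/-- Deleting `c w` leaves an arc out of any set of path vertices. -/
lemma exists_exit_of_segment (C : TwinConfig A z x y c m k) (P : ℕ → Prop) {w : ℕ} (hw : 1 ≤ w)
    (hwm : w < m) (hPw : ¬ P w) (hP : ∃ i, 1 ≤ i ∧ i < m ∧ P i) :
    ∃ u, 1 ≤ u ∧ u < m ∧ P u ∧ (k ≤ u ∨ A (c u) z ∨
      ∃ v, 1 ≤ v ∧ v < m ∧ ¬ P v ∧ v ≠ w ∧ A (c u) (c v)) := by
  obtain ⟨i, h1, h2, h3⟩ := hP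
  obtain ⟨_, ⟨u, hu1, hum, hPu, rfl⟩, v, hv, hvw, huv⟩ :=
    C.exit (c w) {v | ∃ i, 1 ≤ i ∧ i < m ∧ P i ∧ c i = v}
      (by
        rintro ⟨j, h4, h5, h6, h7⟩
        rw [C.inj j w h4 h5 hw hwm h7] at h6
        exact hPw h6)
      ⟨c i, i, h1, h2, h3, rfl⟩
      ⟨x, by
        rintro ⟨j, h4, h5, -, h7⟩
        exact C.ne_x j h4 h5 h7, (C.ne_x w hw hwm).symm⟩
  refine ⟨u, hu1, hum, hPu, ?_⟩
  rcases C.cover v with rfl | rfl | rfl | ⟨j, h4, h5, rfl⟩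
  · exact Or.inl ((C.x_in u hu1 hum).1 huv)
  · exact Or.inl ((C.y_in u hu1 hum).1 huv)
  · exact Or.inr (Or.inl huv)
  · refine Or.inr (Or.inr ⟨j, h4, h5, fun h ↦ hv ⟨j, h4, h5, h, rfl⟩, ?_, huv⟩)
    rintro rfl
    exact hvw rfl

/-- Deleting `c w` leaves an arc out of any set consisting of `z` and path vertices. -/
lemma exists_exit_of_insert (C : TwinConfig A z x y c m k) (P : ℕ → Prop) {w : ℕ} (hw : 1 ≤ w)
    (hwm : w < m) (hPw : ¬ P w) :
    (∃ v, 1 ≤ v ∧ v < m ∧ ¬ P v ∧ v ≠ w ∧ A z (c v)) ∨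
    ∃ u, 1 ≤ u ∧ u < m ∧ P u ∧ (k ≤ u ∨
      ∃ v, 1 ≤ v ∧ v < m ∧ ¬ P v ∧ v ≠ w ∧ A (c u) (c v)) := by
  obtain ⟨u, hu, v, hv, hvw, huv⟩ :=
    C.exit (c w) {v | v = z ∨ ∃ i, 1 ≤ i ∧ i < m ∧ P i ∧ c i = v}
      (by
        rintro (h | ⟨j, h4, h5, h6, h7⟩)
        · exact C.ne_z w hw hwm h
        · rw [C.inj j w h4 h5 hw hwm h7] at h6
          exact hPw h6)
      ⟨z, Or.inl rfl⟩
      ⟨x, by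
        rintro (h | ⟨j, h4, h5, -, h7⟩)
        · exact C.x_ne_z h
        · exact C.ne_x j h4 h5 h7, (C.ne_x w hw hwm).symm⟩
  have hv' : v ≠ z := fun h ↦ hv (Or.inl h)
  have key : ∀ j, 1 ≤ j → j < m → c j = v → ¬ P j ∧ j ≠ w := by
    rintro j h4 h5 rfl
    refine ⟨fun h ↦ hv (Or.inr ⟨j, h4, h5, h, rfl⟩), ?_⟩
    rintro rfl
    exact hvw rfl
  rcases hu with rfl | ⟨u, hu1, hum, hPu, rfl⟩
  · refine Or.inl ?_
    rcases C.cover v with rfl | rfl | rfl | ⟨j, h4, h5, rfl⟩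
    · exact (C.not_zx huv).elim
    · exact (C.not_zy huv).elim
    · exact (hv' rfl).elim
    · exact ⟨j, h4, h5, (key j h4 h5 rfl).1, (key j h4 h5 rfl).2, huv⟩
  · refine Or.inr ⟨u, hu1, hum, hPu, ?_⟩
    rcases C.cover v with rfl | rfl | rfl | ⟨j, h4, h5, rfl⟩
    · exact Or.inl ((C.x_in u hu1 hum).1 huv)
    · exact Or.inl ((C.y_in u hu1 hum).1 huv)
    · exact (hv' rfl).elim
    · exact Or.inr ⟨j, h4, h5, (key j h4 h5 rfl).1, (key j h4 h5 rfl).2, huv⟩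

lemma isHamiltonian_of_replace_pair (C : TwinConfig A z x y c m k) {g : ℕ} (hg : 2 ≤ g)
    (hgk : g + 2 ≤ k) (hs : A (c (g - 1)) z) (ht : A z (c (g + 2))) (hsg : ¬ A (c g) z)
    (hgap : ∀ i, g < i → i < k → A (c i) z ∨ A z (c (i + 1))) : IsHamiltonian A := by
  classical
  by_contra H
  obtain ⟨rfl, ho2, ho3, hno, hmono, hlast, hn1⟩ := C.twins_of_replace_pair H hg hgk hs ht
  simp only [Nat.add_one_sub_one, Nat.reduceAdd] at hs ht
  have hkm := C.lt
  have hex : ∃ j, 4 ≤ j ∧ j < m ∧ A (c j) (c 2) := ⟨m - 1, by omega, by omega, hlast⟩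
  set τ := Nat.find hex with hτ
  obtain ⟨h4τ, hτm, hτ2⟩ := Nat.find_spec hex
  rw [← hτ] at h4τ hτm hτ2
  have hmin : ∀ j, 4 ≤ j → j < τ → ¬ A (c j) (c 2) := fun j h1 h2 h3 ↦
    Nat.find_min hex h2 ⟨h1, by omega, h3⟩
  have hto : ∀ j, τ ≤ j → j < m → A (c j) (c 2) := by
    intro j h1
    induction j, h1 using Nat.le_induction with
    | base => exact fun _ ↦ hτ2
    | succ j h1 ih => exact fun h2 ↦ hmono j (by omega) h2 (ih (by omega))
  have h2τ : 5 ≤ τ → A (c 2) (c τ) := fun h ↦ by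
    have := ho2 (τ - 1) (by omega) (by omega) (hmin _ (by omega) (by omega))
    rwa [show τ - 1 + 1 = τ by omega] at this
  have h3τ : 5 ≤ τ → A (c 3) (c τ) := fun h ↦ by
    have := ho3 (τ - 1) (by omega) (by omega) (hmin _ (by omega) (by omega))
    rwa [show τ - 1 + 1 = τ by omega] at this
  have hτk : τ ≤ k := by
    by_contra h
    exact H (C.isHamiltonian_of_jump_of_out (u := 3) (v := τ) (by omega) (by omega) (by omega) hτm
      (h3τ (by omega)) ht)
  have hins : ∀ i, 1 ≤ i → i + 1 < m → A (c i) z → ¬ A z (c (i + 1)) := fun i h1 h2 h3 h4 ↦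
    H (C.isHamiltonian_of_insert h1 h2 h3 h4)
  have hprop : ∀ i j, 3 ≤ i → i ≤ j → j + 1 ≤ τ → A (c i) z → A (c j) z := by
    intro i j h1 h2
    induction j, h2 using Nat.le_induction with
    | base => exact fun _ h ↦ h
    | succ j h2 ih =>
      intro h3 h4
      refine (hgap (j + 1) (by omega) (by omega)).resolve_right fun h ↦ ?_
      exact H (C.isHamiltonian_of_replace (by omega) (by omega) (ih (by omega) h4) h)
  have hT : ∀ i, 3 ≤ i → i < τ → ¬ A (c i) z ∧ A z (c (i + 1)) := by
    intro i h1 h2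
    have hn : ¬ A (c i) z := by
      rcases Nat.lt_or_ge τ 5 with h | h
      · obtain rfl : i = 3 := by omega
        exact fun h ↦ hins 3 (by omega) (by omega) h ht
      · exact fun h3 ↦ H (C.isHamiltonian_of_jump_of_in (u := 2) (v := τ) (by omega) (by omega)
          (by omega) hτm (h2τ h) (hprop i _ h1 (by omega) (by omega) h3))
    exact ⟨hn, (hgap i (by omega) (by omega)).resolve_left hn⟩
  obtain ⟨u, hu1, hum, ⟨h2u, huτ⟩, h⟩ := C.exists_exit_of_segment (fun i ↦ 2 ≤ i ∧ i < τ) (w := τ)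
    (by omega) hτm (by simp) ⟨2, by omega, by omega, le_rfl, by omega⟩
  rcases h with h | h | ⟨v, hv1, hvm, hv, hvτ, huv⟩
  · omega
  · rcases h2u.eq_or_lt with rfl | h2u
    · exact hsg h
    · exact (hT u h2u huτ).1 h
  · rcases h2u.eq_or_lt with rfl | h2u
    · rcases Nat.lt_or_ge v 2 with h | h
      · obtain rfl : v = 1 := by omega
        exact hn1 huv
      · have := hno (v - 1) (by omega) (by omega) (hto _ (by omega) (by omega))
        rw [show v - 1 + 1 = v by omega] at this
        exact this huv
    · rcases Nat.lt_or_ge v 2 with h | h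
      · obtain rfl : v = 1 := by omega
        exact H (C.isHamiltonian_of_back_arc (by omega) (by omega) huv hs (hT u h2u huτ).2
          (by omega))
      · exact H (C.isHamiltonian_of_back_jump (by omega) (by omega) hvm huv hs (hT u h2u huτ).2
          (hto _ (by omega) (by omega)))

/-- A twin configuration in which `z` dominates none of `c (k + 1), …, c (m - 1)` is
Hamiltonian. -/
lemma isHamiltonian_of_forall_not_out (C : TwinConfig A z x y c m k)
    (hT : ∀ i, k < i → i < m → ¬ A z (c i)) : IsHamiltonian A := by
  classical
  by_contra H
  have hkm := C.lt
  have hins : ∀ i, 1 ≤ i → i + 1 < m → A (c i) z → ¬ A z (c (i + 1)) := fun i h1 h2 h3 h4 ↦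
    H (C.isHamiltonian_of_insert h1 h2 h3 h4)
  have hrep : ∀ i, 1 ≤ i → i + 2 < m → A (c i) z → ¬ A z (c (i + 2)) := fun i h1 h2 h3 h4 ↦
    H (C.isHamiltonian_of_replace h1 h2 h3 h4)
  have hjin : ∀ u v, 1 ≤ u → u < k → u + 2 ≤ v → v < m → A (c u) (c v) → ¬ A (c (v - 1)) z :=
    fun u v h1 h2 h3 h4 h5 h6 ↦ H (C.isHamiltonian_of_jump_of_in h1 h2 h3 h4 h5 h6)
  obtain ⟨p, q, hp, hpk, hkq, hqm, hpq⟩ :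
      ∃ p q, 1 ≤ p ∧ p < k ∧ k < q ∧ q < m ∧ A (c p) (c q) := by
    rcases C.exists_exit_of_insert (fun i ↦ i < k) (w := k) C.one_le hkm (by simp) with
      ⟨v, h1, h2, h3, h4, h5⟩ | ⟨u, h1, h2, h3, h4 | ⟨v, h4, h5, h6, h7, h8⟩⟩
    · exact (hT v (by omega) h2 h5).elim
    · omega
    · exact ⟨u, v, h1, h3, by omega, h5, h8⟩
  have hempty : ∀ i j, 1 ≤ i → i < j → j < k → ¬ A (c i) z → ¬ A z (c (i + 1)) →
      ¬ A (c j) z → ¬ A z (c (j + 1)) → False := by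
    intro i j h1 h2 h3 h4 h5 h6 h7
    refine C.not_three_empty_gaps H h1 h2 (l := q - 1) (by omega) (by omega) ⟨h4, h5⟩ ⟨h6, h7⟩
      ⟨hjin p q hp hpk (by omega) hqm hpq, ?_⟩
    rw [show q - 1 + 1 = q by omega]
    exact hT q hkq hqm
  have huniq : ∀ g, 1 ≤ g → g < k → ¬ A (c g) z → ¬ A z (c (g + 1)) → ∀ i, 1 ≤ i → i < k →
      i ≠ g → A (c i) z ∨ A z (c (i + 1)) := by
    intro g h1 h2 h3 h4 i h5 h6 h7
    by_contra! h8
    rcases lt_or_gt_of_ne h7 with h9 | h9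
    · exact hempty i g h5 h9 h2 h8.1 h8.2 h3 h4
    · exact hempty g i h1 h9 h6 h3 h4 h8.1 h8.2
  obtain ⟨a, ha, hak, hta, hmax⟩ : ∃ a, 1 ≤ a ∧ a + 1 ≤ k ∧ A z (c (a + 1)) ∧
      ∀ j, a + 1 < j → j < m → ¬ A z (c j) := by
    obtain ⟨v, h1, h2, h3⟩ : ∃ v, 2 ≤ v ∧ v ≤ k ∧ A z (c v) := by
      rcases C.exists_exit_of_insert (fun _ ↦ False) (w := 1) le_rfl (by omega) not_false with
        ⟨v, h1, h2, -, h4, h5⟩ | ⟨u, -, -, h, -⟩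
      · exact ⟨v, by omega, not_lt.1 fun h ↦ hT v h h2 h5, h5⟩
      · exact h.elim
    have h4 := Nat.le_findGreatest (P := fun j ↦ A z (c j)) h2 h3
    have h5 := Nat.findGreatest_spec (P := fun j ↦ A z (c j)) h2 h3
    have h6 := Nat.findGreatest_le (P := fun j ↦ A z (c j)) k
    refine ⟨Nat.findGreatest (fun j ↦ A z (c j)) k - 1, by omega, by omega, ?_, ?_⟩
    · rwa [Nat.sub_add_cancel (by omega)]
    · intro j h7 h8
      rcases Nat.lt_or_ge k j with h9 | h9
      · exact hT j h9 h8
      · exact Nat.findGreatest_is_greatest (P := fun j ↦ A z (c j)) (by omega) h9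
  have hsa : ¬ A (c a) z := fun h ↦ hins a ha (by omega) h hta
  have hexit : ∃ u v, 1 ≤ u ∧ u ≤ a ∧ a + 2 ≤ v ∧ v < m ∧ A (c u) (c v) := by
    rcases C.exists_exit_of_insert (fun i ↦ i ≤ a) (w := a + 1) (by omega) (by omega) (by simp) with
      ⟨v, h1, h2, h3, h4, h5⟩ | ⟨u, h1, h2, h3, h4 | ⟨v, h4, h5, h6, h7, h8⟩⟩
    · exact (hmax v (by omega) h2 h5).elim
    · omega
    · exact ⟨u, v, h1, h3, by omega, h5, h8⟩
  obtain ⟨u, v, hu1, hua, hav, hvm, huv⟩ := hexit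
  by_cases hX : ∃ g, 1 ≤ g ∧ g ≤ a ∧ ¬ A (c g) z ∧ ¬ A z (c (g + 1))
  · obtain ⟨g, hg1, hga, hsg, htg⟩ := hX
    have hga : g < a := by
      refine lt_of_le_of_ne hga ?_
      rintro rfl
      exact htg hta
    have hsome := huniq g hg1 (by omega) hsg htg
    have hprop : ∀ i j, 1 ≤ i → i ≤ j → j < k → (i ≤ g → j < g) → A (c i) z → A (c j) z := by
      intro i j h1 h2
      induction j, h2 using Nat.le_induction with
      | base => exact fun _ _ h ↦ h
      | succ j h2 ih =>
        intro h3 h4 h5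
        refine (hsome (j + 1) (by omega) (by omega) (by omega)).resolve_right fun h ↦ ?_
        exact hrep j (by omega) (by omega) (ih (by omega) (by omega) h5) h
    have hhigh : ∀ i, g < i → i ≤ a → A z (c (i + 1)) := fun i h1 h2 ↦
      (hsome i (by omega) (by omega) (by omega)).resolve_left fun h ↦
        hsa (hprop i a (by omega) h2 (by omega) (by omega) h)
    by_cases hβ : 2 ≤ g ∧ A (c (g - 1)) z
    · exact H (C.isHamiltonian_of_replace_pair hβ.1 (by omega) hβ.2
        (hhigh (g + 1) (by omega) (by omega)) hsg fun i h1 h2 ↦ hsome i (by omega) h2 (by omega))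
    · have hlow : ∀ i, 1 ≤ i → i < g → A z (c (i + 1)) := fun i h1 h2 ↦
        (hsome i h1 (by omega) (by omega)).resolve_left fun h ↦
          hβ ⟨by omega, hprop i (g - 1) h1 (by omega) (by omega) (by omega) h⟩
      have hkv : k < v := by
        by_contra h
        have := (hsome (v - 1) (by omega) (by omega) (by omega)).resolve_left
          (hjin u v hu1 (by omega) (by omega) hvm huv)
        rw [show v - 1 + 1 = v by omega] at this
        exact hmax v (by omega) hvm this
      rcases lt_trichotomy u g with h | rfl | h
      · exact H (C.isHamiltonian_of_jump_of_out hu1 hkv (by omega) hvm huv (hlow u hu1 h))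
      · exact H (C.isHamiltonian_of_jump_of_skip hu1 hkv (by omega) hvm huv
          (hhigh (u + 1) (by omega) (by omega)))
      · exact H (C.isHamiltonian_of_jump_of_out hu1 hkv (by omega) hvm huv (hhigh u h hua))
  · push Not at hX
    have hlow : ∀ i, 1 ≤ i → i ≤ a → A z (c (i + 1)) := by
      intro i h1 h2
      refine hX i h1 h2 fun h3 ↦ ?_
      have hprop : ∀ j, i ≤ j → j ≤ a → A (c j) z := by
        intro j h4
        induction j, h4 using Nat.le_induction with
        | base => exact fun _ ↦ h3
        | succ j h4 ih =>
          intro h5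
          by_contra h6
          exact hrep j (by omega) (by omega) (ih (by omega)) (hX (j + 1) (by omega) h5 h6)
      exact hsa (hprop a h2 le_rfl)
    have hvk : v ≤ k := by
      by_contra h
      exact H (C.isHamiltonian_of_jump_of_out hu1 (by omega) (by omega) hvm huv (hlow u hu1 hua))
    have hsv := hjin u v hu1 (by omega) (by omega) hvm huv
    have htv := hmax v (by omega) hvm
    obtain ⟨g, rfl⟩ : ∃ g, v = g + 1 := ⟨v - 1, by omega⟩
    rw [Nat.add_sub_cancel] at hsv
    have hsome := huniq g (by omega) (by omega) hsv htv
    rcases Nat.lt_or_ge (a + 1) g with h | h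
    · have := (hsome (g - 1) (by omega) (by omega) (by omega)).resolve_right (by
        rw [show g - 1 + 1 = g by omega]
        exact hmax g h (by omega))
      exact H (C.isHamiltonian_of_jump_of_in_before hu1 (by omega) (by omega) hvm huv
        (by rwa [show g + 1 - 2 = g - 1 by omega]))
    · obtain rfl : g = a + 1 := by omega
      rcases C.exists_exit_of_insert (fun i ↦ i ≤ a + 1) (w := a + 2) (by omega) (by omega)
        (by simp) with
        ⟨v, h1, h2, h3, h4, h5⟩ | ⟨u', h1, h2, h3, h4 | ⟨v, h4, h5, h6, h7, h8⟩⟩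
      · exact hmax v (by omega) h2 h5
      · omega
      · have hkv : k < v := by
          by_contra h
          have := (hsome (v - 1) (by omega) (by omega) (by omega)).resolve_left
            (hjin u' v h1 (by omega) (by omega) h5 h8)
          rw [show v - 1 + 1 = v by omega] at this
          exact hmax v (by omega) h5 this
        rcases h3.eq_or_lt with rfl | h3
        · exact H (C.isHamiltonian_of_two_jumps hu1 (by omega) (by omega) hkv h5 huv h8)
        · exact H (C.isHamiltonian_of_jump_of_out h1 hkv (by omega) h5 h8
            (hlow u' h1 (by omega)))
end TwinConfig
end Core

/-- A non-Hamiltonian digraph with a cycle missing two vertices is a twin configuration. -/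
lemma exists_twinConfig {V : Type*} [Fintype V] {A : V → V → Prop} {z : V} {m : ℕ}
    (hirr : ∀ u, ¬ A u u) (h2 : IsKStrong A 2)
    (hdeg : ∀ v, v ≠ z → Fintype.card V ≤ degree A v) (hdegz : m ≤ degree A z + 2)
    (hcard : m + 2 = Fintype.card V) {c : Fin m → V} (hc : IsCycle A c) (hz : z ∈ Set.range c)
    (H : ¬ IsHamiltonian A) : ∃ x y d k, TwinConfig A z x y d m k := by
  classical
  obtain ⟨hm, hinj, hstep⟩ := hc
  obtain ⟨i₀, rfl⟩ := hz
  have hmod : ∀ i, i % m < m := fun i ↦ Nat.mod_lt _ (by omega)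
  set d : ℕ → V := fun i ↦ c ⟨(i + i₀) % m, hmod _⟩ with hd
  have hdstep : ∀ i, A (d i) (d (i + 1)) := fun i ↦ by
    have := hstep ⟨(i + i₀) % m, hmod _⟩
    simpa [hd, add_right_comm] using this
  have hper : ∀ i, d (i + m) = d i := fun i ↦ by
    simp [hd, add_right_comm _ m]
  have hd0 : d 0 = c i₀ := by
    simp [hd, Nat.mod_eq_of_lt i₀.2]
  have hdinj : ∀ i j, i < m → j < m → d i = d j → i = j := fun i j hi hj h ↦ by
    have h1 := congrArg Fin.val (hinj h)
    have h3 : i ≡ j [MOD m] := Nat.ModEq.add_right_cancel' _ h1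
    exact h3.eq_of_lt_of_lt hi hj
  have hsurj : ∀ i, ∃ j < m, d j = c i := fun i ↦ by
    refine ⟨(i + (m - i₀)) % m, hmod _, ?_⟩
    simp only [hd]
    congr 1
    ext
    have h1 := i₀.2
    simp only [Nat.mod_add_mod]
    rw [show (i : ℕ) + (m - i₀) + i₀ = i + m by omega, Nat.add_mod_right, Nat.mod_eq_of_lt i.2]
  have hcompl : ((univ.image c)ᶜ : Finset V).card = 2 := by
    rw [card_compl, card_image_of_injective _ hinj, card_univ, Fintype.card_fin]
    omega
  obtain ⟨x, y, hxy, hset⟩ := card_eq_two.1 hcompl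
  have hmem : ∀ v, v ∉ Set.range c ↔ v = x ∨ v = y := fun v ↦ by
    have := Finset.ext_iff.1 hset v
    simpa using this
  have hdx : ∀ i, d i ≠ x := fun i h ↦ (hmem x).2 (Or.inl rfl) ⟨_, h⟩
  have hdy : ∀ i, d i ≠ y := fun i h ↦ (hmem y).2 (Or.inr rfl) ⟨_, h⟩
  have hcov : ∀ u, u ≠ x → u ≠ y → ∃ i < m, d i = u := fun u h1 h3 ↦ by
    by_contra h4
    rcases (hmem u).1 (by
      rintro ⟨i, rfl⟩
      exact h4 (hsurj i)) with h | h
    exacts [h1 h, h3 h]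
  rw [← hd0] at hdeg hdegz ⊢
  obtain ⟨axy, ayx, gx, gy, htw, hlast⟩ := twins_of_periodic hirr hm hcard hdstep hper hcov hdeg
    (hdx 0).symm (hdy 0).symm H
  have hne : ∀ i, 1 ≤ i → i < m → d i ≠ d 0 := fun i h1 h3 h ↦ by
    have := hdinj i 0 h3 (by omega) h
    omega
  have hmono : ∀ i j, i ≤ j → j < m → A (d i) x → A (d j) x := by
    intro i j h1
    induction j, h1 using Nat.le_induction with
    | base => exact fun _ h ↦ h
    | succ j h1 ih =>
      intro h3 h4
      by_contra h5
      exact hne (j + 1) (by omega) h3 (hlast j (ih (by omega) h4) h5)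
  have hex : ∃ i, 1 ≤ i ∧ i < m ∧ A (d i) x := by
    obtain ⟨_, ⟨i, h1, h3, rfl⟩, v, hv, hv0, hiv⟩ := h2.exists_exit (d 0)
      {v | ∃ i, 1 ≤ i ∧ i < m ∧ d i = v} (fun ⟨i, h1, h3, h⟩ ↦ hne i h1 h3 h)
      ⟨d 1, 1, le_rfl, by omega, rfl⟩ ⟨x, fun ⟨i, _, _, h⟩ ↦ hdx i h, (hdx 0).symm⟩
    refine ⟨i, h1, h3, ?_⟩
    by_cases hvx : v = x
    · rwa [← hvx]
    by_cases hvy : v = y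
    · rwa [htw, ← hvy]
    obtain ⟨j, hj, rfl⟩ := hcov v hvx hvy
    rcases Nat.eq_zero_or_pos j with rfl | h0
    · exact (hv0 rfl).elim
    · exact (hv ⟨j, h0, hj, rfl⟩).elim
  have h0x : ¬ A (d 0) x := by
    intro h
    have hno : ∀ i, i + 1 < m → ¬ A x (d (i + 1)) ∧ ¬ A y (d (i + 1)) := fun i hi ↦ by
      have := hmono 0 i (by omega) (by omega) h
      rw [gx, gy, ← htw]
      exact ⟨not_not.2 this, not_not.2 this⟩
    obtain ⟨u, hu, v, hv, hv0, huv⟩ := h2.exists_exit (d 0) {x, y}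
      (by simp [hdx, hdy]) ⟨x, by simp⟩ ⟨d 1, by simp [hdx, hdy], hne 1 le_rfl (by omega)⟩
    simp only [Set.mem_insert_iff, Set.mem_singleton_iff, not_or] at hu hv
    obtain ⟨j, hj, rfl⟩ := hcov v hv.1 hv.2
    cases j with
    | zero => exact hv0 rfl
    | succ j =>
      rcases hu with rfl | rfl
      · exact (hno j hj).1 huv
      · exact (hno j hj).2 huv
  obtain ⟨hk1, hkm, hkx⟩ := Nat.find_spec hex
  set k := Nat.find hex with hk
  have hin : ∀ i, i < m → (A (d i) x ↔ k ≤ i) := fun i hi ↦ by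
    refine ⟨fun h ↦ ?_, fun h ↦ hmono k i h hi hkx⟩
    by_contra h1
    rcases Nat.eq_zero_or_pos i with rfl | h3
    · exact h0x h
    · exact Nat.find_min hex (not_le.1 h1) ⟨h3, hi, h⟩
  have hlastx : A (d (m - 1)) x := (hin _ (by omega)).2 (by omega)
  have hdm : d (m - 1 + 1) = d 0 := by
    rw [Nat.sub_add_cancel (by omega), ← hper 0, Nat.zero_add]
  refine ⟨x, y, d, k, ?_⟩
  exact
    { irr := hirr
      card := hcard
      exit := h2.exists_exit
      deg := hdeg
      degz := hdegz
      cover := fun v ↦ by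
        by_cases h1 : v = x
        · exact Or.inl h1
        by_cases h3 : v = y
        · exact Or.inr (Or.inl h3)
        obtain ⟨i, hi, rfl⟩ := hcov v h1 h3
        rcases Nat.eq_zero_or_pos i with rfl | h
        · exact Or.inr (Or.inr (Or.inl rfl))
        · exact Or.inr (Or.inr (Or.inr ⟨i, h, hi, rfl⟩))
      inj := fun i j _ h1 _ h3 h ↦ hdinj i j h1 h3 h
      ne_x := fun i _ _ ↦ hdx i
      ne_y := fun i _ _ ↦ hdy i
      ne_z := hne
      x_ne_y := hxy
      x_ne_z := (hdx 0).symm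
      y_ne_z := (hdy 0).symm
      step := fun i _ _ ↦ hdstep i
      z_first := hdstep 0
      last_z := hdm ▸ hdstep (m - 1)
      xy := axy
      yx := ayx
      x_out := fun i h1 h3 ↦ by
        obtain ⟨j, rfl⟩ : ∃ j, i = j + 1 := ⟨i - 1, by omega⟩
        rw [gx, hin j (by omega)]
        omega
      y_out := fun i h1 h3 ↦ by
        obtain ⟨j, rfl⟩ : ∃ j, i = j + 1 := ⟨i - 1, by omega⟩
        rw [gy, ← htw, hin j (by omega)]
        omega
      x_in := fun i _ h3 ↦ hin i h3
      y_in := fun i _ h3 ↦ (htw i).symm.trans (hin i h3)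
      not_zx := h0x
      not_xz := by
        rw [← hdm, gx]
        exact not_not.2 hlastx
      not_zy := by rwa [← htw]
      not_yz := by
        rw [← hdm, gy, ← htw]
        exact not_not.2 hlastx
      one_le := hk1
      lt := hkm }

/-- Let `D` be a 2-strong digraph of order `n` such that `n - 1` vertices have degree
at least `n` and the remaining vertex `z` has degree at least `n - 4`.  If `D` contains
a directed cycle of length `n - 2` through `z`, then `D` is Hamiltonian. -/
theorem statement4 {V : Type*} [Fintype V] [DecidableEq V] (A : V → V → Prop)
    (hirr : Irreflexive A)
    (n : ℕ) (hcard : Fintype.card V = n)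
    (h2strong : IsKStrong A 2)
    (z : V)
    (hdeg : ∀ v : V, v ≠ z → n ≤ degree A v)
    (hdegz : n - 4 ≤ degree A z)
    (hcyc : ∃ c : Fin (n - 2) → V, IsCycle A c ∧ z ∈ Set.range c) :
    IsHamiltonian A := by
  by_contra H
  obtain ⟨c, hc, hz⟩ := hcyc
  have hn := hc.1
  subst hcard
  obtain ⟨x, y, d, k, C⟩ := exists_twinConfig hirr h2strong hdeg (by omega) (by omega) hc hz H
  have hkm := C.lt
  by_cases hT : ∃ q, k < q ∧ q < Fintype.card V - 2 ∧ A z (d q)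
  · obtain ⟨q, hkq, hqm, hq⟩ := hT
    exact H (C.reverse.isHamiltonian_of_forall_not_out fun i h1 h2 h3 ↦
      H (C.isHamiltonian_of_bypass (by omega) (by omega) hkq hqm h3 hq)).of_flip
  · push Not at hT
    exact H (C.isHamiltonian_of_forall_not_out hT)
end
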